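/- arXiv:1906.09778 — 2 statements merged into one kernel-verified Lean document; each statement's English description precedes it below -/
import Mathlib

section
/- Strong maximum principle: let Ω ⊆ ℝⁿ be an open connected set. (i) If M_a is of class 𝒜_n and u is a nonnegative continuous viscosity supersolution of M_a(D²u) = 0 in Ω that attains its infimum m at some point x₀ ∈ Ω, then u ≡ m in Ω. (ii) If M_a is of class 𝒜_1 and u is a continuous viscosity subsolution of M_a(D²u) = 0 in Ω that attains its supremum M at some point x₀ ∈ Ω, then u ≡ M in Ω. -/
open Set Metric MeasureTheory Filter

noncomputable section

/-- Euclidean `n`-space `ℝⁿ`. -/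
abbrev En (n : ℕ) : Type := EuclideanSpace ℝ (Fin n)

/-- The eigenvalues of a (symmetric) matrix, arranged in nondecreasing order. -/
noncomputable def sortedEig {n : ℕ} (X : Matrix (Fin n) (Fin n) ℝ) : Fin n → ℝ :=
  if hX : X.IsHermitian then fun i => hX.eigenvalues (Tuple.sort hX.eigenvalues i) else 0

/-- The weighted partial trace operator `M_a(X) = Σ a_i λ_i(X)`. -/
noncomputable def Ma {n : ℕ} (a : Fin n → ℝ) (X : Matrix (Fin n) (Fin n) ℝ) : ℝ :=
  ∑ i, a i * sortedEig X i

/-- The last index of `Fin n`. -/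
def lastIdx (n : ℕ) [NeZero n] : Fin n :=
  ⟨n - 1, Nat.sub_lt (Nat.pos_of_ne_zero (NeZero.ne n)) Nat.one_pos⟩

/-- The class 𝒜̄ : all weights nonnegative, some weight positive. -/
def ClassAbar {n : ℕ} (a : Fin n → ℝ) : Prop := (∀ i, 0 ≤ a i) ∧ ∃ i, 0 < a i

/-- The class 𝒜 : nonnegative weights with `a 1 > 0` and `a n > 0`. -/
def ClassA {n : ℕ} [NeZero n] (a : Fin n → ℝ) : Prop :=
  (∀ i, 0 ≤ a i) ∧ 0 < a 0 ∧ 0 < a (lastIdx n)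

/-- The class 𝒜₁ : nonnegative weights with `a 1 > 0`. -/
def ClassA1 {n : ℕ} [NeZero n] (a : Fin n → ℝ) : Prop := (∀ i, 0 ≤ a i) ∧ 0 < a 0

/-- The class 𝒜ₙ : nonnegative weights with `a n > 0`. -/
def ClassAn {n : ℕ} [NeZero n] (a : Fin n → ℝ) : Prop :=
  (∀ i, 0 ≤ a i) ∧ 0 < a (lastIdx n)

/-- `a* = min (a 1) (a n)`. -/
noncomputable def aStar {n : ℕ} [NeZero n] (a : Fin n → ℝ) : ℝ := min (a 0) (a (lastIdx n))

/-- `â_j = (a 1 + ⋯ + a n) - a j`. -/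
noncomputable def hatA {n : ℕ} (a : Fin n → ℝ) (j : Fin n) : ℝ := (∑ i, a i) - a j

/-- The Hessian matrix of `φ` at `x`. -/
noncomputable def hess {n : ℕ} (φ : En n → ℝ) (x : En n) : Matrix (Fin n) (Fin n) ℝ :=
  fun i j => iteratedFDeriv ℝ 2 φ x ![EuclideanSpace.single i 1, EuclideanSpace.single j 1]

/-- The Hessian matrix of `φ` at `x`, with derivatives taken within `Ω`. -/
noncomputable def hessOn {n : ℕ} (Ω : Set (En n)) (φ : En n → ℝ) (x : En n) :
    Matrix (Fin n) (Fin n) ℝ :=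
  fun i j =>
    iteratedFDerivWithin ℝ 2 φ Ω x ![EuclideanSpace.single i 1, EuclideanSpace.single j 1]

/-- `u` is a viscosity subsolution of `M_a(D²u) = f` in `Ω`. -/
def IsViscSubsol {n : ℕ} (a : Fin n → ℝ) (Ω : Set (En n)) (f u : En n → ℝ) : Prop :=
  ∀ x₀ ∈ Ω, ∀ φ : En n → ℝ, ContDiff ℝ 2 φ →
    IsLocalMaxOn (fun x => u x - φ x) Ω x₀ → f x₀ ≤ Ma a (hess φ x₀)

/-- `u` is a viscosity supersolution of `M_a(D²u) = f` in `Ω`. -/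
def IsViscSupersol {n : ℕ} (a : Fin n → ℝ) (Ω : Set (En n)) (f u : En n → ℝ) : Prop :=
  ∀ x₀ ∈ Ω, ∀ φ : En n → ℝ, ContDiff ℝ 2 φ →
    IsLocalMinOn (fun x => u x - φ x) Ω x₀ → Ma a (hess φ x₀) ≤ f x₀

/-- `u` is a (continuous) viscosity solution of `M_a(D²u) = f` in `Ω`. -/
def IsViscSolution {n : ℕ} (a : Fin n → ℝ) (Ω : Set (En n)) (f u : En n → ℝ) : Prop :=
  ContinuousOn u Ω ∧ IsViscSubsol a Ω f u ∧ IsViscSupersol a Ω f u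

/-- The `L^p` norm of `f` on `D`. -/
noncomputable def lpNormOn {n : ℕ} (p : ℝ) (D : Set (En n)) (f : En n → ℝ) : ℝ :=
  (∫ x in D, |f x| ^ p) ^ (1 / p)

/-- The sup norm of `f` on `D`. -/
noncomputable def supAbsOn {n : ℕ} (D : Set (En n)) (f : En n → ℝ) : ℝ :=
  sSup ((fun x => |f x|) '' D)

/-- The Hölder seminorm `[h]_{β,D}`. -/
noncomputable def holderSemi {n : ℕ} (β : ℝ) (D : Set (En n)) (h : En n → ℝ) : ℝ :=
  sSup {r | ∃ x ∈ D, ∃ y ∈ D, x ≠ y ∧ r = |h x - h y| / ‖x - y‖ ^ β}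

/-- The Hölder norm `‖g‖_{C^β(D)} = sup_D |g| + [g]_{β,D}`. -/
noncomputable def cBetaNorm {n : ℕ} (β : ℝ) (D : Set (En n)) (g : En n → ℝ) : ℝ :=
  supAbsOn D g + holderSemi β D g

/-- `g` is `β`-Hölder continuous on `D`. -/
def HolderOn {n : ℕ} (β : ℝ) (D : Set (En n)) (g : En n → ℝ) : Prop :=
  ∃ K : ℝ, ∀ x ∈ D, ∀ y ∈ D, |g x - g y| ≤ K * ‖x - y‖ ^ β

/-- The `C^{1,β}(D)` norm: `sup|g| + sup|Dg| + [Dg]_{β,D}`. -/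
noncomputable def c1BetaNorm {n : ℕ} (β : ℝ) (D : Set (En n)) (g : En n → ℝ) : ℝ :=
  supAbsOn D g + sSup ((fun x => ‖fderiv ℝ g x‖) '' D) +
    sSup {r | ∃ x ∈ D, ∃ y ∈ D, x ≠ y ∧ r = ‖fderiv ℝ g x - fderiv ℝ g y‖ / ‖x - y‖ ^ β}

/-- `g ∈ C^{1,β}(D)`: differentiable with `β`-Hölder derivative on `D`. -/
def C1HolderOn {n : ℕ} (β : ℝ) (D : Set (En n)) (g : En n → ℝ) : Prop :=
  ContDiff ℝ 1 g ∧ ∃ K : ℝ, ∀ x ∈ D, ∀ y ∈ D,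
    ‖fderiv ℝ g x - fderiv ℝ g y‖ ≤ K * ‖x - y‖ ^ β

/-- Uniform exterior sphere condition with radius `R`: every boundary point lies on the
boundary of a closed ball of radius `R` containing `Ω̄`. -/
def ExtSphere {n : ℕ} (Ω : Set (En n)) (R : ℝ) : Prop :=
  ∀ y ∈ frontier Ω, ∃ z : En n, dist y z = R ∧ closure Ω ⊆ closedBall z R

/-- The cone `Σ_θ = {x : xₙ ≥ |x| cos θ}`. -/
def coneSet (n : ℕ) [NeZero n] (θ : ℝ) : Set (En n) := {x | ‖x‖ * Real.cos θ ≤ x (lastIdx n)}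

/-- Uniform exterior cone condition. -/
def ExtCone {n : ℕ} [NeZero n] (Ω : Set (En n)) : Prop :=
  ∃ θ₀ ∈ Set.Ioo (0 : ℝ) Real.pi, ∃ r₀ > (0 : ℝ), ∀ y ∈ frontier Ω,
    ∃ O : En n ≃ₗᵢ[ℝ] En n,
      closure Ω ∩ ball y r₀ ⊆ (fun x => y + O x) '' coneSet n θ₀

/-- Uniform Lipschitz boundary with Lipschitz constant `L`: near each boundary point, in
suitable rotated coordinates, `Ω` is the region above the graph of an `L`-Lipschitz
function. -/
def LipschitzBoundary {n : ℕ} [NeZero n] (Ω : Set (En n)) (L : ℝ) : Prop :=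
  ∃ r₀ > (0 : ℝ), ∀ y ∈ frontier Ω, ∃ O : En n ≃ₗᵢ[ℝ] En n, ∃ ψ : En n → ℝ,
    LipschitzWith (Real.toNNReal L) ψ ∧
    ∀ x ∈ ball (0 : En n) r₀,
      (y + O x ∈ Ω ↔ ψ (x - EuclideanSpace.single (lastIdx n) (x (lastIdx n))) < x (lastIdx n))

/-- The open cube of edge `ℓ` centered at the origin. -/
def cube (n : ℕ) (ℓ : ℝ) : Set (En n) := {x | ∀ i, |x i| < ℓ / 2}

/-- The upper concave envelope of `u` in `Ω`: the smallest concave function `≥ u` in `Ω`. -/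
noncomputable def upperEnvelope {n : ℕ} (Ω : Set (En n)) (u : En n → ℝ) : En n → ℝ :=
  fun x => sInf {t | ∃ φ : En n → ℝ, ConcaveOn ℝ Ω φ ∧ (∀ z ∈ Ω, u z ≤ φ z) ∧ t = φ x}

/-- The lower convex envelope of `u` in `Ω`: the largest convex function `≤ u` in `Ω`. -/
noncomputable def lowerEnvelope {n : ℕ} (Ω : Set (En n)) (u : En n → ℝ) : En n → ℝ :=
  fun x => sSup {t | ∃ φ : En n → ℝ, ConvexOn ℝ Ω φ ∧ (∀ z ∈ Ω, φ z ≤ u z) ∧ t = φ x}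

end

/-- The radial test function. -/
noncomputable def gaussTest {n : ℕ} (ε α : ℝ) (y : En n) : En n → ℝ :=
  fun x => ε * Real.exp (-α * ‖x - y‖ ^ 2)

/-- The model Hessian. -/
noncomputable def modelMat {n : ℕ} (c t : ℝ) (v : En n) : Matrix (Fin n) (Fin n) ℝ :=
  fun i j => c * (2 * t * (v i * v j) - if i = j then 1 else 0)

theorem gaussTest_contDiff {n : ℕ} (ε α : ℝ) (y : En n) : ContDiff ℝ 2 (gaussTest ε α y) := by
  unfold gaussTest
  have h : ContDiff ℝ 2 (fun x : En n => ‖x - y‖ ^ 2) :=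
    (contDiff_id.sub contDiff_const).norm_sq ℝ
  exact contDiff_const.mul (Real.contDiff_exp.comp (contDiff_const.mul h))

theorem gaussTest_hasFDerivAt {n : ℕ} (ε α : ℝ) (y x : En n) :
    HasFDerivAt (gaussTest ε α y) ((-2 * α * gaussTest ε α y x) • innerSL ℝ (x - y)) x := by
  unfold gaussTest
  have h : HasFDerivAt (fun x : En n => ‖x - y‖ ^ 2) (2 • innerSL ℝ (x - y)) x := by
    have := ((hasFDerivAt_id (𝕜 := ℝ) x).sub_const y).norm_sq
    simpa using this
  have h2 := ((h.const_mul (-α)).exp).const_mul ε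
  refine h2.congr_fderiv ?_
  ext z
  simp
  ring

theorem gaussTest_hess {n : ℕ} (ε α : ℝ) (y x : En n) :
    hess (gaussTest ε α y) x = modelMat (2 * α * gaussTest ε α y x) α (x - y) := by
  have h1 : fderiv ℝ (gaussTest ε α y) =
      fun x => (-2 * α * gaussTest ε α y x) • innerSL ℝ (x - y) :=
    funext fun x => (gaussTest_hasFDerivAt ε α y x).fderiv
  have h2 : HasFDerivAt (fun x : En n => innerSL ℝ (x - y)) (innerSL ℝ : En n →L[ℝ] _) x := by
    have := (innerSL ℝ : En n →L[ℝ] (En n →L[ℝ] ℝ)).hasFDerivAt.comp x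
      ((hasFDerivAt_id (𝕜 := ℝ) x).sub_const y)
    rw [ContinuousLinearMap.comp_id] at this
    exact this
  have h3 : HasFDerivAt (fun x => (-2 * α * gaussTest ε α y x) • innerSL ℝ (x - y)) _ x :=
    ((gaussTest_hasFDerivAt ε α y x).const_mul (-2 * α)).smul h2
  ext i j
  unfold hess modelMat
  rw [iteratedFDeriv_two_apply, h1, h3.fderiv]
  have h4 : (innerSL ℝ (EuclideanSpace.single i (1 : ℝ) : En n)) (EuclideanSpace.single j 1)
      = if i = j then 1 else 0 := by
    rw [innerSL_apply_apply, EuclideanSpace.inner_single_left]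
    simp [PiLp.single_apply]
  clear h1 h2 h3
  simp [EuclideanSpace.inner_single_right]
  erw [h4]
  ring

theorem modelMat_isHermitian {n : ℕ} (c t : ℝ) (v : En n) : (modelMat c t v).IsHermitian := by
  ext i j
  simp only [modelMat, Matrix.conjTranspose_apply, star_trivial]
  rw [mul_comm (v j)]
  simp only [eq_comm]

theorem modelMat_trace {n : ℕ} (c t : ℝ) (v : En n) :
    (modelMat c t v).trace = c * (2 * t * ‖v‖ ^ 2 - n) := by
  simp only [Matrix.trace, Matrix.diag, modelMat, EuclideanSpace.norm_sq_eq, if_true]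
  rw [← Finset.mul_sum, Finset.sum_sub_distrib, ← Finset.mul_sum]
  simp [sq]

theorem modelMat_quad {n : ℕ} (c t : ℝ) (v x : En n) :
    x.ofLp ⬝ᵥ (modelMat c t v).mulVec x.ofLp = c * (2 * t * (inner ℝ v x) ^ 2 - ‖x‖ ^ 2) := by
  have hi : inner ℝ v x = ∑ i, v i * x i := by
    simp [PiLp.inner_apply, mul_comm]
  rw [EuclideanSpace.norm_sq_eq, hi, sq, Finset.sum_mul_sum, Finset.mul_sum, mul_sub,
    Finset.mul_sum, Finset.mul_sum]
  simp only [dotProduct, Matrix.mulVec, modelMat]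
  rw [← Finset.sum_sub_distrib]
  refine Finset.sum_congr rfl fun i _ => ?_
  simp only [Finset.mul_sum, mul_sub, sub_mul, Finset.sum_sub_distrib, mul_ite, ite_mul]
  simp only [mul_one, mul_zero, zero_mul, Finset.sum_ite_eq, Finset.mem_univ, if_true]
  congr 1
  · exact Finset.sum_congr rfl fun j _ => by ring
  · simp [sq]; ring

theorem sortedEig_sum {n : ℕ} {X : Matrix (Fin n) (Fin n) ℝ} (hX : X.IsHermitian) :
    ∑ i, sortedEig X i = X.trace := by
  rw [hX.trace_eq_sum_eigenvalues]
  simp only [sortedEig, hX, dif_pos]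
  exact Equiv.sum_comp (Tuple.sort hX.eigenvalues) (fun i => hX.eigenvalues i)

theorem sortedEig_mono {n : ℕ} {X : Matrix (Fin n) (Fin n) ℝ} (hX : X.IsHermitian) :
    Monotone (sortedEig X) := by
  simp only [sortedEig, hX, dif_pos]
  exact Tuple.monotone_sort hX.eigenvalues

theorem sortedEig_quad {n : ℕ} {X : Matrix (Fin n) (Fin n) ℝ} (hX : X.IsHermitian) (i : Fin n) :
    ∃ x : En n, ‖x‖ = 1 ∧ sortedEig X i = x.ofLp ⬝ᵥ X.mulVec x.ofLp := by
  refine ⟨hX.eigenvectorBasis (Tuple.sort hX.eigenvalues i), ?_, ?_⟩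
  · simp
  · simp only [sortedEig, hX, dif_pos]
    rw [hX.eigenvalues_eq]
    simp

theorem Ma_pos_of_model {n : ℕ} [NeZero n] {a : Fin n → ℝ} (ha : ClassAn a)
    {c t : ℝ} (hc : 0 < c) (ht : 0 ≤ t) (v : En n)
    (h : n * (∑ i, a i) / a (lastIdx n) < t * ‖v‖ ^ 2) : 0 < Ma a (modelMat c t v) := by
  have hX := modelMat_isHermitian c t v
  set X := modelMat c t v with hXd
  have hn : (0 : ℝ) < n := by exact_mod_cast Nat.pos_of_ne_zero (NeZero.ne n)
  have hge : ∀ i, 0 ≤ sortedEig X i + c := by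
    intro i
    obtain ⟨x, hx, he⟩ := sortedEig_quad hX i
    rw [he, hXd, modelMat_quad, hx]
    have : 0 ≤ c * (2 * t * inner ℝ v x ^ 2) := by positivity
    nlinarith
  have hsum : ∑ i, (sortedEig X i + c) = c * (2 * t * ‖v‖ ^ 2) := by
    rw [Finset.sum_add_distrib, sortedEig_sum hX, hXd, modelMat_trace]
    simp; ring
  have hle : ∑ i, (sortedEig X i + c) ≤ n * (sortedEig X (lastIdx n) + c) := by
    have := Finset.sum_le_card_nsmul Finset.univ (fun i => sortedEig X i + c)
      (sortedEig X (lastIdx n) + c) (fun i _ => by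
        have : i ≤ lastIdx n := by
          rw [Fin.le_def]; simp only [lastIdx]; omega
        linarith [sortedEig_mono hX this])
    rw [Finset.card_univ, Fintype.card_fin, nsmul_eq_mul] at this
    exact this
  have hMa : Ma a X = ∑ i, a i * (sortedEig X i + c) - c * ∑ i, a i := by
    unfold Ma
    rw [Finset.mul_sum, ← Finset.sum_sub_distrib]
    exact Finset.sum_congr rfl fun i _ => by ring
  have hs : a (lastIdx n) * (sortedEig X (lastIdx n) + c) ≤
      ∑ i, a i * (sortedEig X i + c) :=
    Finset.single_le_sum (f := fun i => a i * (sortedEig X i + c))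
      (fun i _ => mul_nonneg (ha.1 i) (hge i)) (Finset.mem_univ _)
  rw [div_lt_iff₀ ha.2] at h
  have hS : 0 ≤ ∑ i, a i := Finset.sum_nonneg fun i _ => ha.1 i
  rw [hMa]
  have h1 : a (lastIdx n) * (c * (2 * t * ‖v‖ ^ 2)) ≤
      a (lastIdx n) * (n * (sortedEig X (lastIdx n) + c)) :=
    mul_le_mul_of_nonneg_left (hsum ▸ hle) ha.2.le
  have h2 := mul_lt_mul_of_pos_left h hc
  have h4 : 0 ≤ c * (n * ∑ i, a i) := by positivity
  have h3 : 0 < n * (a (lastIdx n) * (sortedEig X (lastIdx n) + c) - c * ∑ i, a i) := by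
    nlinarith
  have := (mul_pos_iff_of_pos_left hn).1 h3
  linarith

theorem Ma_neg_of_model {n : ℕ} [NeZero n] {a : Fin n → ℝ} (ha : ClassA1 a)
    {c t : ℝ} (hc : 0 < c) (ht : 0 ≤ t) (v : En n)
    (h : n * (∑ i, a i) / a 0 < t * ‖v‖ ^ 2) : Ma a (modelMat (-c) t v) < 0 := by
  have hX := modelMat_isHermitian (-c) t v
  set X := modelMat (-c) t v with hXd
  have hn : (0 : ℝ) < n := by exact_mod_cast Nat.pos_of_ne_zero (NeZero.ne n)
  have hge : ∀ i, 0 ≤ c - sortedEig X i := by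
    intro i
    obtain ⟨x, hx, he⟩ := sortedEig_quad hX i
    rw [he, hXd, modelMat_quad, hx]
    have : 0 ≤ c * (2 * t * inner ℝ v x ^ 2) := by positivity
    nlinarith
  have hsum : ∑ i, (c - sortedEig X i) = c * (2 * t * ‖v‖ ^ 2) := by
    rw [Finset.sum_sub_distrib, sortedEig_sum hX, hXd, modelMat_trace]
    simp; ring
  have hle : ∑ i, (c - sortedEig X i) ≤ n * (c - sortedEig X 0) := by
    have := Finset.sum_le_card_nsmul Finset.univ (fun i => c - sortedEig X i)
      (c - sortedEig X 0) (fun i _ => by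
        have : (0 : Fin n) ≤ i := by
          rw [Fin.le_def]; simp
        linarith [sortedEig_mono hX this])
    rw [Finset.card_univ, Fintype.card_fin, nsmul_eq_mul] at this
    exact this
  have hMa : Ma a X = c * ∑ i, a i - ∑ i, a i * (c - sortedEig X i) := by
    unfold Ma
    rw [Finset.mul_sum, ← Finset.sum_sub_distrib]
    exact Finset.sum_congr rfl fun i _ => by ring
  have hs : a 0 * (c - sortedEig X 0) ≤ ∑ i, a i * (c - sortedEig X i) :=
    Finset.single_le_sum (f := fun i => a i * (c - sortedEig X i))
      (fun i _ => mul_nonneg (ha.1 i) (hge i)) (Finset.mem_univ _)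
  rw [div_lt_iff₀ ha.2] at h
  have hS : 0 ≤ ∑ i, a i := Finset.sum_nonneg fun i _ => ha.1 i
  rw [hMa]
  have h1 : a 0 * (c * (2 * t * ‖v‖ ^ 2)) ≤ a 0 * (n * (c - sortedEig X 0)) :=
    mul_le_mul_of_nonneg_left (hsum ▸ hle) ha.2.le
  have h2 := mul_lt_mul_of_pos_left h hc
  have h4 : 0 ≤ c * (n * ∑ i, a i) := by positivity
  have h3 : 0 < n * (a 0 * (c - sortedEig X 0) - c * ∑ i, a i) := by
    nlinarith
  have := (mul_pos_iff_of_pos_left hn).1 h3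
  linarith

theorem smp_core {n : ℕ} (Ω : Set (En n)) (hΩo : IsOpen Ω) (hΩc : IsConnected Ω)
    (u : En n → ℝ) (hu : ContinuousOn u Ω) (K : ℝ)
    (H : ∀ x ∈ Ω, ∀ (ε α : ℝ) (y : En n), 0 < ε → 0 < α →
      IsLocalMinOn (fun x => u x - gaussTest ε α y x) Ω x → α * ‖x - y‖ ^ 2 ≤ K)
    (x₀ : En n) (hx₀ : x₀ ∈ Ω) (hmin : ∀ x ∈ Ω, u x₀ ≤ u x) : ∀ x ∈ Ω, u x = u x₀ := by
  set m := u x₀ with hm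
  have hopen : IsOpen {x | x ∈ Ω ∧ u x = m} := by
    rw [Metric.isOpen_iff]
    rintro x₁ ⟨hx₁, hux₁⟩
    obtain ⟨R, hR, hRΩ⟩ := Metric.nhds_basis_closedBall.mem_iff.1 (hΩo.mem_nhds hx₁)
    set r := R / 3 with hr
    have hr0 : 0 < r := by positivity
    refine ⟨r, hr0, fun y hy => ?_⟩
    have hyr : dist y x₁ < r := hy
    have hyΩ : y ∈ Ω := hRΩ (by rw [mem_closedBall]; linarith)
    refine ⟨hyΩ, ?_⟩
    by_contra hne
    -- touching point
    have hcK : IsCompact (closedBall x₁ R ∩ u ⁻¹' {m}) :=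
      (isCompact_closedBall x₁ R).of_isClosed_subset
        ((hu.mono hRΩ).preimage_isClosed_of_isClosed isClosed_closedBall isClosed_singleton)
        inter_subset_left
    obtain ⟨z, ⟨hzR, hzu⟩, hzmin⟩ := hcK.exists_isMinOn
      ⟨x₁, mem_closedBall_self hR.le, hux₁⟩ (f := fun x => dist x y) (by fun_prop)
    have hzu : u z = m := hzu
    set ρ := dist z y with hρ
    have hzmin' : ∀ x ∈ closedBall x₁ R, u x = m → ρ ≤ dist x y := fun x h1 h2 => hzmin ⟨h1, h2⟩
    have hρr : ρ < r := by
      have := hzmin' x₁ (mem_closedBall_self hR.le) hux₁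
      rw [dist_comm] at this
      linarith
    have hρ0 : 0 < ρ := by
      rw [hρ, dist_pos]
      rintro rfl
      exact hne hzu
    have hball : ∀ x, dist x y ≤ 2 * ρ → x ∈ closedBall x₁ R := by
      intro x hx
      rw [mem_closedBall]
      have := dist_triangle x y x₁
      linarith
    have hpos : ∀ x, dist x y < ρ → m < u x := by
      intro x hx
      have hxR := hball x (by linarith)
      refine lt_of_le_of_ne (hmin x (hRΩ hxR)) fun h => ?_
      linarith [hzmin' x hxR h.symm]
    obtain ⟨p, hp, hpmin⟩ := (isCompact_closedBall y (ρ / 2)).exists_isMinOn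
      ⟨y, mem_closedBall_self (by positivity)⟩
      (f := u) (hu.mono fun x hx => hRΩ (hball x (by rw [mem_closedBall] at hx; linarith)))
    rw [mem_closedBall] at hp
    set ε := u p - m with hε
    have hε0 : 0 < ε := by
      have := hpos p (by linarith)
      linarith
    set α := (4 * (|K| + 1)) / ρ ^ 2 with hα
    have hα0 : 0 < α := by positivity
    have hg : Continuous (gaussTest ε α y) := (gaussTest_contDiff ε α y).continuous
    obtain ⟨w, hw, hwmin⟩ := (isCompact_closedBall y (2 * ρ)).exists_isMinOn
      ⟨y, mem_closedBall_self (by positivity)⟩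
      (f := fun x => u x - gaussTest ε α y x)
      ((hu.mono fun x hx => hRΩ (hball x hx)).sub hg.continuousOn)
    rw [mem_closedBall] at hw
    have hwΩ : w ∈ Ω := hRΩ (hball w hw)
    have hwz : u w - gaussTest ε α y w ≤ u z - gaussTest ε α y z :=
      hwmin (show z ∈ closedBall y (2 * ρ) by rw [mem_closedBall]; linarith)
    have hgz : gaussTest ε α y z = ε * Real.exp (-α * ρ ^ 2) := by
      simp only [gaussTest, hρ, dist_eq_norm]
    have hgw : gaussTest ε α y w = ε * Real.exp (-α * (dist w y) ^ 2) := by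
      simp only [gaussTest, dist_eq_norm]
    have hgzp : 0 < gaussTest ε α y z := by rw [hgz]; positivity
    have hwlt : dist w y < 2 * ρ := by
      refine lt_of_le_of_ne hw fun h => ?_
      have h1 := hmin w hwΩ
      have h2 : gaussTest ε α y w < gaussTest ε α y z := by
        rw [hgw, hgz, h]
        refine mul_lt_mul_of_pos_left (Real.exp_lt_exp.2 ?_) hε0
        have : 0 < α * ρ ^ 2 := by positivity
        nlinarith
      linarith
    have hwgt : ρ / 2 < dist w y := by
      by_contra h
      push Not at h
      have h1 : u p ≤ u w := hpmin (show w ∈ closedBall y (ρ / 2) from h)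
      have h2 : gaussTest ε α y w ≤ ε := by
        rw [hgw]
        have : Real.exp (-α * (dist w y) ^ 2) ≤ 1 := by
          rw [Real.exp_le_one_iff]
          have : 0 ≤ α * (dist w y) ^ 2 := by positivity
          linarith
        nlinarith
      linarith
    have hloc : IsLocalMinOn (fun x => u x - gaussTest ε α y x) Ω w := by
      have : closedBall y (2 * ρ) ∈ nhds w :=
        mem_of_superset (isOpen_ball.mem_nhds (show w ∈ ball y (2 * ρ) from hwlt))
          ball_subset_closedBall
      exact (hwmin.isLocalMin this).on Ω
    have hfin := H w hwΩ ε α y hε0 hα0 hloc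
    rw [← dist_eq_norm] at hfin
    have h5 : α * (ρ / 2) ^ 2 ≤ α * dist w y ^ 2 := by gcongr
    have h6 : α * (ρ / 2) ^ 2 = |K| + 1 := by
      rw [hα]; field_simp; norm_num
    linarith [le_abs_self K]
  have hsub : Ω ⊆ {x | x ∈ Ω ∧ u x = m} := by
    refine hΩc.isPreconnected.subset_of_closure_inter_subset hopen ⟨x₀, hx₀, hx₀, rfl⟩ ?_
    rintro x ⟨hxc, hxΩ⟩
    refine ⟨hxΩ, ?_⟩
    have hc : ContinuousWithinAt u {x | x ∈ Ω ∧ u x = m} x :=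
      (hu x hxΩ).mono fun _ h => h.1
    have := hc.mem_closure (t := {m}) hxc (fun _ h => h.2)
    simpa using this
  exact fun x hx => (hsub hx).2

theorem hess_neg' {n : ℕ} (φ : En n → ℝ) (x : En n) (c t : ℝ) (v : En n)
    (h : hess φ x = modelMat c t v) : hess (fun x => -φ x) x = modelMat (-c) t v := by
  have h1 : hess (fun x => -φ x) x = - hess φ x := by
    ext i j
    simp only [hess, Matrix.neg_apply]
    rw [show (fun x => -φ x) = -φ from rfl, iteratedFDeriv_neg_apply]
    rfl
  rw [h1, h]
  ext i j
  simp [modelMat]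

/-- **Strong maximum principle (Theorem 6.2).** Let `Ω ⊆ ℝⁿ` be open and connected.
(i) If `M_a ∈ 𝒜ₙ` and `u` is a nonnegative continuous viscosity supersolution of
`M_a(D²u) = 0` in `Ω` attaining its infimum `m` at some `x₀ ∈ Ω`, then `u ≡ m` in `Ω`.
(ii) If `M_a ∈ 𝒜₁` and `u` is a continuous viscosity subsolution attaining its supremum
`M` at some `x₀ ∈ Ω`, then `u ≡ M` in `Ω`. -/
theorem strong_maximum_principle (n : ℕ) [NeZero n] (a : Fin n → ℝ)
    (Ω : Set (En n)) (hΩo : IsOpen Ω) (hΩc : IsConnected Ω) :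
    (ClassAn a →
      ∀ u : En n → ℝ, ContinuousOn u Ω → (∀ x ∈ Ω, 0 ≤ u x) →
        IsViscSupersol a Ω (fun _ => 0) u →
        ∀ x₀ ∈ Ω, (∀ x ∈ Ω, u x₀ ≤ u x) → ∀ x ∈ Ω, u x = u x₀) ∧
    (ClassA1 a →
      ∀ u : En n → ℝ, ContinuousOn u Ω →
        IsViscSubsol a Ω (fun _ => 0) u →
        ∀ x₀ ∈ Ω, (∀ x ∈ Ω, u x ≤ u x₀) → ∀ x ∈ Ω, u x = u x₀) := by
  refine ⟨fun ha u hu _ hsup x₀ hx₀ hmin => ?_, fun ha u hu hsub x₀ hx₀ hmax => ?_⟩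
  · refine smp_core Ω hΩo hΩc u hu (n * (∑ i, a i) / a (lastIdx n)) ?_ x₀ hx₀ hmin
    intro x hx ε α y hε hα hloc
    by_contra hlt
    push Not at hlt
    have h := hsup x hx _ (gaussTest_contDiff ε α y) hloc
    rw [gaussTest_hess] at h
    have hg : 0 < gaussTest ε α y x := by unfold gaussTest; positivity
    have := Ma_pos_of_model ha (c := 2 * α * gaussTest ε α y x) (by positivity) hα.le (x - y) hlt
    linarith
  · have key := smp_core Ω hΩo hΩc (fun x => - u x) hu.neg (n * (∑ i, a i) / a 0) ?_ x₀ hx₀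
      (fun x hx => neg_le_neg (hmax x hx))
    · exact fun x hx => neg_injective (key x hx)
    intro x hx ε α y hε hα hloc
    by_contra hlt
    push Not at hlt
    have hmx : IsLocalMaxOn (fun x => u x - (-gaussTest ε α y x)) Ω x := by
      have h := hloc.neg
      have he : (fun x => u x - (-gaussTest ε α y x)) =
          fun x => -((fun x => -u x) x - gaussTest ε α y x) := by
        funext z
        ring
      rw [he]
      exact h
    have h := hsub x hx _ (gaussTest_contDiff ε α y).neg hmx
    rw [hess_neg' _ _ _ _ _ (gaussTest_hess ε α y x)] at h
    have hg : 0 < gaussTest ε α y x := by unfold gaussTest; positivity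
    have := Ma_neg_of_model ha (c := 2 * α * gaussTest ε α y x) (by positivity) hα.le (x - y) hlt
    linarith
end

section
/- Liouville theorem: let M_a be a weighted partial trace operator of class 𝒜. If u is an entire viscosity solution of M_a(D²u) = 0 on all of ℝⁿ which is bounded above or bounded below, then u is constant. -/
open Set Metric MeasureTheory Filter

section LinAlg
variable {n : ℕ}

/-- the matrix of an operator -/
noncomputable def matOf (T : En n →L[ℝ] En n) : Matrix (Fin n) (Fin n) ℝ :=
  fun i j => inner ℝ (T (EuclideanSpace.single i 1)) (EuclideanSpace.single j 1)

def SymOp (T : En n →L[ℝ] En n) : Prop := ∀ x y, inner ℝ (T x) y = inner ℝ x (T y)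

noncomputable def lam (T : En n →L[ℝ] En n) (i : Fin n) : ℝ := sortedEig (matOf T) i

noncomputable def MT (a : Fin n → ℝ) (T : En n →L[ℝ] En n) : ℝ := Ma a (matOf T)

lemma MT_eq (a : Fin n → ℝ) (T : En n →L[ℝ] En n) : MT a T = ∑ i, a i * lam T i := rfl

lemma matOf_herm {T : En n →L[ℝ] En n} (hT : SymOp T) : (matOf T).IsHermitian := by
  ext i j
  simp only [Matrix.conjTranspose_apply, matOf, star_trivial]
  rw [hT, real_inner_comm]

lemma matOf_mulVec {T : En n →L[ℝ] En n} (hT : SymOp T) (v : En n) (i : Fin n) :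
    (matOf T).mulVec (⇑v) i = T v i := by
  have h1 : T v i = inner ℝ (EuclideanSpace.single i (1:ℝ)) (T v) := by
    simp [EuclideanSpace.inner_single_left]
  rw [h1, ← hT]
  simp [Matrix.mulVec, dotProduct, matOf, PiLp.inner_apply, mul_comm]

lemma lam_spec {T : En n →L[ℝ] En n} (hT : SymOp T) :
    Monotone (lam T) ∧ ∃ b : OrthonormalBasis (Fin n) ℝ (En n), ∀ i, T (b i) = lam T i • b i := by
  have hX := matOf_herm hT
  have hl : lam T = hX.eigenvalues ∘ (Tuple.sort hX.eigenvalues) := by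
    funext i; rw [lam, sortedEig, dif_pos hX]; rfl
  refine ⟨by rw [hl]; exact Tuple.monotone_sort _,
    hX.eigenvectorBasis.reindex (Tuple.sort hX.eigenvalues).symm, fun i => ?_⟩
  rw [hl]
  simp only [OrthonormalBasis.reindex_apply, Equiv.symm_symm, Function.comp]
  have h := hX.mulVec_eigenvectorBasis (Tuple.sort hX.eigenvalues i)
  ext j
  rw [← matOf_mulVec hT]
  have := congrFun h j
  simpa using this

lemma inner_T_basis {T : En n →L[ℝ] En n} (hT : SymOp T) (b : OrthonormalBasis (Fin n) ℝ (En n))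
    (hb : ∀ i, T (b i) = lam T i • b i) (v : En n) :
    inner ℝ (T v) v = ∑ j, lam T j * (inner ℝ (b j) v) ^ 2 := by
  rw [← b.sum_inner_mul_inner (T v) v]
  refine Finset.sum_congr rfl fun j _ => ?_
  rw [hT, hb, inner_smul_right, real_inner_comm]; ring

lemma norm_sq_basis (b : OrthonormalBasis (Fin n) ℝ (En n)) (v : En n) :
    ‖v‖ ^ 2 = ∑ j, (inner ℝ (b j) v) ^ 2 := by
  rw [← real_inner_self_eq_norm_sq, ← b.sum_inner_mul_inner v v]
  refine Finset.sum_congr rfl fun j _ => ?_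
  rw [real_inner_comm]; ring

lemma span_basis (b : OrthonormalBasis (Fin n) ℝ (En n)) (s : Finset (Fin n)) :
    ∃ U : Submodule ℝ (En n), Module.finrank ℝ U = s.card ∧
      ∀ v ∈ U, ∀ j, j ∉ s → inner ℝ (b j) v = 0 := by
  classical
  refine ⟨Submodule.span ℝ (Set.range (fun i : s => b i)), ?_, ?_⟩
  · rw [finrank_span_eq_card]
    · simp
    · exact b.orthonormal.linearIndependent.comp _ Subtype.val_injective
  · intro v hv j hj
    induction hv using Submodule.span_induction with
    | mem x hx =>
      obtain ⟨i, rfl⟩ := hx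
      have : j ≠ (i : Fin n) := fun h => hj (h ▸ i.2)
      simpa using b.orthonormal.2 this
    | zero => simp
    | add x y _ _ hx hy => rw [inner_add_right, hx, hy, add_zero]
    | smul c x _ hx => rw [inner_smul_right, hx, mul_zero]

lemma exists_low {T : En n →L[ℝ] En n} (hT : SymOp T) (i : Fin n) :
    ∃ U : Submodule ℝ (En n), Module.finrank ℝ U = i + 1 ∧
      ∀ v ∈ U, inner ℝ (T v) v ≤ lam T i * ‖v‖ ^ 2 := by
  obtain ⟨hm, b, hb⟩ := lam_spec hT
  obtain ⟨U, hU, h⟩ := span_basis b (Finset.Iic i)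
  refine ⟨U, by rw [hU]; simp, fun v hv => ?_⟩
  rw [inner_T_basis hT b hb, norm_sq_basis b, Finset.mul_sum]
  refine Finset.sum_le_sum fun j _ => ?_
  by_cases hj : j ∈ Finset.Iic i
  · exact mul_le_mul_of_nonneg_right (hm (by simpa using hj)) (sq_nonneg _)
  · simp [h v hv j hj]

lemma exists_high {T : En n →L[ℝ] En n} (hT : SymOp T) (i : Fin n) :
    ∃ U : Submodule ℝ (En n), Module.finrank ℝ U = n - i ∧
      ∀ v ∈ U, lam T i * ‖v‖ ^ 2 ≤ inner ℝ (T v) v := by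
  obtain ⟨hm, b, hb⟩ := lam_spec hT
  obtain ⟨U, hU, h⟩ := span_basis b (Finset.Ici i)
  refine ⟨U, by rw [hU]; simp, fun v hv => ?_⟩
  rw [inner_T_basis hT b hb, norm_sq_basis b, Finset.mul_sum]
  refine Finset.sum_le_sum fun j _ => ?_
  by_cases hj : j ∈ Finset.Ici i
  · exact mul_le_mul_of_nonneg_right (hm (by simpa using hj)) (sq_nonneg _)
  · simp [h v hv j hj]

lemma le_lam {T : En n →L[ℝ] En n} (hT : SymOp T) (i : Fin n) (V : Submodule ℝ (En n))
    (hV : Module.finrank ℝ V = n - i) (t : ℝ) (h : ∀ v ∈ V, t * ‖v‖ ^ 2 ≤ inner ℝ (T v) v) :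
    t ≤ lam T i := by
  obtain ⟨U, hU, hU'⟩ := exists_low hT i
  have hlt : Module.finrank ℝ (En n) < Module.finrank ℝ V + Module.finrank ℝ U := by
    rw [hV, hU, finrank_euclideanSpace_fin]; have := i.2; omega
  have : ∃ v ∈ V ⊓ U, v ≠ 0 := by
    by_contra hcon
    push Not at hcon
    have hbot : V ⊓ U = ⊥ := (Submodule.eq_bot_iff _).2 hcon
    have h1 := Submodule.finrank_sup_add_finrank_inf_eq V U
    rw [hbot, finrank_bot] at h1
    have h2 := Submodule.finrank_le (V ⊔ U)
    omega
  obtain ⟨v, ⟨hv1, hv2⟩, hv0⟩ := this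
  have h1 := h v hv1
  have h2 := hU' v hv2
  have h3 : 0 < ‖v‖ ^ 2 := by positivity
  exact le_of_mul_le_mul_right (h1.trans h2) h3

lemma lam_le {T : En n →L[ℝ] En n} (hT : SymOp T) (i : Fin n) (V : Submodule ℝ (En n))
    (hV : Module.finrank ℝ V = i + 1) (t : ℝ) (h : ∀ v ∈ V, inner ℝ (T v) v ≤ t * ‖v‖ ^ 2) :
    lam T i ≤ t := by
  obtain ⟨U, hU, hU'⟩ := exists_high hT i
  have hlt : Module.finrank ℝ (En n) < Module.finrank ℝ V + Module.finrank ℝ U := by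
    rw [hV, hU, finrank_euclideanSpace_fin]; have := i.2; omega
  have : ∃ v ∈ V ⊓ U, v ≠ 0 := by
    by_contra hcon
    push Not at hcon
    have hbot : V ⊓ U = ⊥ := (Submodule.eq_bot_iff _).2 hcon
    have h1 := Submodule.finrank_sup_add_finrank_inf_eq V U
    rw [hbot, finrank_bot] at h1
    have h2 := Submodule.finrank_le (V ⊔ U)
    omega
  obtain ⟨v, ⟨hv1, hv2⟩, hv0⟩ := this
  have h1 := h v hv1
  have h2 := hU' v hv2
  have h3 : 0 < ‖v‖ ^ 2 := by positivity
  exact le_of_mul_le_mul_right (h2.trans h1) h3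

lemma lam_weyl {S T : En n →L[ℝ] En n} (hS : SymOp S) (hT : SymOp T) (c : ℝ)
    (h : ∀ v, inner ℝ (S v) v ≤ inner ℝ (T v) v + c * ‖v‖ ^ 2) (i : Fin n) :
    lam S i ≤ lam T i + c := by
  obtain ⟨V, hV, hV'⟩ := exists_high hS i
  have := le_lam hT i V hV (lam S i - c) (fun v hv => by
    have h1 := hV' v hv
    have h2 := h v
    nlinarith)
  linarith

lemma le_lam_all {T : En n →L[ℝ] En n} (hT : SymOp T) (t : ℝ)
    (h : ∀ v, t * ‖v‖ ^ 2 ≤ inner ℝ (T v) v) (i : Fin n) : t ≤ lam T i := by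
  obtain ⟨hm, b, hb⟩ := lam_spec hT
  have := h (b i)
  rw [hb, inner_smul_left] at this
  simpa [real_inner_self_eq_norm_sq] using this

lemma lam_le_all {T : En n →L[ℝ] En n} (hT : SymOp T) (t : ℝ)
    (h : ∀ v, inner ℝ (T v) v ≤ t * ‖v‖ ^ 2) (i : Fin n) : lam T i ≤ t := by
  obtain ⟨hm, b, hb⟩ := lam_spec hT
  have := h (b i)
  rw [hb, inner_smul_left] at this
  simpa [real_inner_self_eq_norm_sq] using this

lemma lam_zero_le [NeZero n] {T : En n →L[ℝ] En n} (hT : SymOp T) (e : En n) (he : ‖e‖ = 1) :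
    lam T 0 ≤ inner ℝ (T e) e := by
  obtain ⟨hm, b, hb⟩ := lam_spec hT
  have h : lam T 0 * ‖e‖ ^ 2 ≤ inner ℝ (T e) e := by
    rw [inner_T_basis hT b hb, norm_sq_basis b, Finset.mul_sum]
    refine Finset.sum_le_sum fun j _ => ?_
    exact mul_le_mul_of_nonneg_right (hm (Fin.zero_le j)) (sq_nonneg _)
  simpa [he] using h

lemma le_lam_last [NeZero n] {T : En n →L[ℝ] En n} (hT : SymOp T) (e : En n) (he : ‖e‖ = 1) :
    inner ℝ (T e) e ≤ lam T (lastIdx n) := by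
  obtain ⟨hm, b, hb⟩ := lam_spec hT
  have h : inner ℝ (T e) e ≤ lam T (lastIdx n) * ‖e‖ ^ 2 := by
    rw [inner_T_basis hT b hb, norm_sq_basis b, Finset.mul_sum]
    refine Finset.sum_le_sum fun j _ => ?_
    refine mul_le_mul_of_nonneg_right (hm ?_) (sq_nonneg _)
    have := j.2
    simp only [lastIdx, Fin.le_def]; omega
  simpa [he] using h

lemma SymOp.smul {T : En n →L[ℝ] En n} (hT : SymOp T) (c : ℝ) : SymOp (c • T) := by
  intro x y; simp [inner_smul_left, inner_smul_right, hT x y]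

lemma SymOp.neg {T : En n →L[ℝ] En n} (hT : SymOp T) : SymOp (-T) := by
  intro x y; simp [hT x y]

lemma SymOp.add {S T : En n →L[ℝ] En n} (hS : SymOp S) (hT : SymOp T) : SymOp (S + T) := by
  intro x y; simp [inner_add_left, inner_add_right, hT x y, hS x y]

lemma SymOp.one : SymOp (1 : En n →L[ℝ] En n) := by
  intro x y; simp

/-- rank one operator -/
noncomputable def rk (p : En n) : En n →L[ℝ] En n := (innerSL ℝ p).smulRight p

lemma rk_apply (p v : En n) : rk p v = (inner ℝ p v : ℝ) • p := by simp [rk]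

lemma SymOp.rk (p : En n) : SymOp (rk p) := by
  intro x y
  simp only [rk_apply, inner_smul_left, inner_smul_right, real_inner_comm x p]
  simp [mul_comm]

lemma inner_rk (p v : En n) : inner ℝ (rk p v) v = (inner ℝ p v : ℝ) ^ 2 := by
  simp only [rk_apply, inner_smul_left]; simp; ring

lemma lam_smul {T : En n →L[ℝ] En n} (hT : SymOp T) {c : ℝ} (hc : 0 < c) (i : Fin n) :
    lam (c • T) i = c * lam T i := by
  have key : ∀ {T : En n →L[ℝ] En n} (_ : SymOp T) {c : ℝ} (_ : 0 < c), c * lam T i ≤ lam (c • T) i := by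
    intro T hT c hc
    obtain ⟨V, hV, hV'⟩ := exists_high hT i
    refine le_lam (hT.smul c) i V hV _ fun v hv => ?_
    have := hV' v hv
    simp only [_root_.smul_apply, inner_smul_left]
    simp
    nlinarith
  refine le_antisymm ?_ (key hT hc)
  have := key (hT.smul c) (inv_pos.2 hc)
  rw [smul_smul, inv_mul_cancel₀ hc.ne', one_smul] at this
  rw [inv_mul_le_iff₀ hc] at this
  exact this

lemma lam_neg {T : En n →L[ℝ] En n} (hT : SymOp T) (i : Fin n) :
    lam (-T) i = - lam T i.rev := by
  have key : ∀ {T : En n →L[ℝ] En n} (_ : SymOp T) (i : Fin n), - lam T i.rev ≤ lam (-T) i := by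
    intro T hT i
    obtain ⟨V, hV, hV'⟩ := exists_low hT i.rev
    refine le_lam hT.neg i V (by rw [hV, Fin.val_rev]; have := i.2; omega) _ fun v hv => ?_
    have := hV' v hv
    simp only [_root_.neg_apply, inner_neg_left]
    linarith
  refine le_antisymm ?_ (key hT i)
  obtain ⟨V, hV, hV'⟩ := exists_high hT i.rev
  refine lam_le hT.neg i V (by rw [hV, Fin.val_rev]; have := i.2; omega) _ fun v hv => ?_
  have := hV' v hv
  simp only [_root_.neg_apply, inner_neg_left]
  linarith

lemma MT_smul (a : Fin n → ℝ) {T : En n →L[ℝ] En n} (hT : SymOp T) {c : ℝ} (hc : 0 < c) :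
    MT a (c • T) = c * MT a T := by
  rw [MT_eq, MT_eq, Finset.mul_sum]
  refine Finset.sum_congr rfl fun i _ => ?_
  rw [lam_smul hT hc]; ring

lemma MT_neg (a : Fin n → ℝ) {T : En n →L[ℝ] En n} (hT : SymOp T) :
    MT a (-T) = - MT (fun i => a i.rev) T := by
  rw [MT_eq, MT_eq, ← Finset.sum_neg_distrib, ← Equiv.sum_comp Fin.revPerm]
  refine Finset.sum_congr rfl fun i _ => ?_
  rw [lam_neg hT]; simp

lemma MT_le (a : Fin n → ℝ) (ha : ∀ i, 0 ≤ a i) {S T : En n →L[ℝ] En n} (hS : SymOp S)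
    (hT : SymOp T) (c : ℝ) (h : ∀ v, inner ℝ (S v) v ≤ inner ℝ (T v) v + c * ‖v‖ ^ 2) :
    MT a S ≤ MT a T + c * ∑ i, a i := by
  rw [MT_eq, MT_eq, Finset.mul_sum, ← Finset.sum_add_distrib]
  refine Finset.sum_le_sum fun i _ => ?_
  have := mul_le_mul_of_nonneg_left (lam_weyl hS hT c h i) (ha i)
  linarith

/-- a gap in the j-th eigenvalue gives a strict inequality -/
lemma MT_gap (a : Fin n → ℝ) (ha : ∀ i, 0 ≤ a i) {S T : En n →L[ℝ] En n} (hS : SymOp S)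
    (hT : SymOp T) (c : ℝ) (hc : 0 ≤ c)
    (h : ∀ v, inner ℝ (S v) v ≤ inner ℝ (T v) v + c * ‖v‖ ^ 2) (j : Fin n) (g : ℝ)
    (hg : lam S j + g ≤ lam T j) :
    MT a S + a j * g ≤ MT a T + c * ∑ i, a i := by
  classical
  rw [MT_eq, MT_eq, Finset.mul_sum, ← Finset.sum_add_distrib,
    ← Finset.add_sum_erase _ _ (Finset.mem_univ j),
    ← Finset.add_sum_erase _ (fun i => a i * lam T i + c * a i) (Finset.mem_univ j)]
  have h1 : ∑ i ∈ Finset.univ.erase j, a i * lam S i ≤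
      ∑ i ∈ Finset.univ.erase j, (a i * lam T i + c * a i) := by
    refine Finset.sum_le_sum fun i _ => ?_
    have := mul_le_mul_of_nonneg_left (lam_weyl hS hT c h i) (ha i)
    linarith
  have h2 := mul_le_mul_of_nonneg_left hg (ha j)
  have h3 := mul_nonneg hc (ha j)
  linarith
end LinAlg

section Core
variable {n : ℕ}

/-- the (normalised) second derivative of the doubling penalty -/
noncomputable def Hf (e θ : En n) (δ : ℝ) (ξ ζ : En n) : ℝ :=
  ‖ξ - ζ‖ ^ 2 - 2 * (inner ℝ e (ξ - ζ)) ^ 2 + 2 * δ ^ 2 * ‖ξ‖ ^ 2 + (inner ℝ θ ξ) ^ 2 +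
    (1 / 8) * (inner ℝ e (ξ - ζ) + inner ℝ θ ξ) ^ 2

lemma sqb {E T N σ : ℝ} (hN : 0 ≤ N) (hE : |E| ≤ N) (hT : |T| ≤ σ * N) (h0 : 0 ≤ σ)
    (h1 : σ ≤ 1) : |(E + T) ^ 2 - E ^ 2| ≤ 3 * σ * N ^ 2 := by
  have e1 : (E + T) ^ 2 - E ^ 2 = 2 * (E * T) + T ^ 2 := by ring
  have h2 : |E * T| ≤ N * (σ * N) := by
    rw [abs_mul]; exact mul_le_mul hE hT (abs_nonneg _) hN
  have h3 : T ^ 2 ≤ (σ * N) ^ 2 := sq_le_sq' (by linarith [abs_le.1 hT]) (abs_le.1 hT).2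
  have h4 : (σ * N) ^ 2 ≤ σ * N ^ 2 := by
    have : σ * σ ≤ σ := by nlinarith
    nlinarith [sq_nonneg N]
  rw [e1, abs_le]
  have := abs_le.1 h2
  constructor <;> nlinarith [sq_nonneg T]

lemma inner_bd {e ξ : En n} {σ : ℝ} (he : ‖e‖ ≤ σ) : |inner ℝ e ξ| ≤ σ * ‖ξ‖ :=
  (abs_real_inner_le_norm e ξ).trans (mul_le_mul_of_nonneg_right he (norm_nonneg _))

lemma qrk (c : ℝ) (v ξ : En n) : inner ℝ (rk (c • v) ξ) ξ = c ^ 2 * (inner ℝ v ξ) ^ 2 := by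
  rw [inner_rk, inner_smul_left]; simp; ring

lemma core_G [NeZero n] (a : Fin n → ℝ) (ha : ClassA a) {k G c σ : ℝ} {e θ θ₂ : En n} {δ : ℝ}
    (hk : 0 < k) (hG : 0 < G) (hc : c ^ 2 = k * G) (he : ‖e‖ = 1) (hσ0 : 0 ≤ σ) (hσ1 : σ ≤ 1)
    (hGσ : 3 * (G * σ) ≤ 1) (h2 : ‖θ₂‖ ≤ σ) (Y : En n →L[ℝ] En n) (hY : SymOp Y)
    (hH : ∀ ζ, - inner ℝ (Y ζ) ζ ≤ k * Hf e θ δ 0 ζ)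
    (hM : MT a (Y + rk (c • (e + θ₂))) ≤ 0) :
    G ≤ 2 * (∑ i, a i) / a (lastIdx n) + 1 := by
  obtain ⟨hpos, ha0, hal⟩ := ha
  set B := Y + rk (c • (e + θ₂)) with hB
  have hBs : SymOp B := hY.add (SymOp.rk _)
  have H1 : ∀ ζ, k * (-‖ζ‖ ^ 2 + (2 - 1/8 + G) * (inner ℝ e ζ) ^ 2) - k * ‖ζ‖ ^ 2 ≤
      inner ℝ (B ζ) ζ := by
    intro ζ
    have h := hH ζ
    have hq : inner ℝ (B ζ) ζ = inner ℝ (Y ζ) ζ + k * G * (inner ℝ e ζ + inner ℝ θ₂ ζ) ^ 2 := by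
      rw [hB, _root_.add_apply, inner_add_left, qrk, hc, inner_add_left]
    simp only [Hf, zero_sub, norm_neg, inner_neg_right, norm_zero, inner_zero_right] at h
    have hs := sqb (norm_nonneg ζ) (by simpa [he] using abs_real_inner_le_norm e ζ)
      (inner_bd (ξ := ζ) h2) hσ0 hσ1
    have hs1 := (abs_le.1 hs).1
    have hkG : 0 < k * G := mul_pos hk hG
    have h3 := mul_le_mul_of_nonneg_left hs1 hkG.le
    have h4 : k * (3 * (G * σ) * ‖ζ‖ ^ 2) ≤ k * (1 * ‖ζ‖ ^ 2) :=
      mul_le_mul_of_nonneg_left (mul_le_mul_of_nonneg_right hGσ (sq_nonneg _)) hk.le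
    rw [hq]
    nlinarith
  have hlow : ∀ i, -(2 * k) ≤ lam B i := le_lam_all hBs _ fun v => by
    have := H1 v
    have h5 : 0 ≤ k * ((2 - 1/8 + G) * (inner ℝ e v) ^ 2) := by positivity
    nlinarith
  have hlast : k * (G - 1) ≤ lam B (lastIdx n) := by
    have h6 := H1 e
    have := le_lam_last hBs e he
    rw [real_inner_self_eq_norm_sq, he] at h6
    nlinarith
  rw [MT_eq, ← Finset.add_sum_erase _ _ (Finset.mem_univ (lastIdx n))] at hM
  have h7 : ∑ i ∈ Finset.univ.erase (lastIdx n), a i * (-(2 * k)) ≤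
      ∑ i ∈ Finset.univ.erase (lastIdx n), a i * lam B i :=
    Finset.sum_le_sum fun i _ => mul_le_mul_of_nonneg_left (hlow i) (hpos i)
  rw [← Finset.sum_mul] at h7
  have h8 : ∑ i ∈ Finset.univ.erase (lastIdx n), a i ≤ ∑ i, a i :=
    Finset.sum_le_sum_of_subset_of_nonneg (Finset.erase_subset _ _) fun i _ _ => hpos i
  have h9 := mul_le_mul_of_nonneg_left hlast hal.le
  have h10 : k * (a (lastIdx n) * (G - 1)) ≤ k * (2 * ∑ i, a i) := by nlinarith
  have h11 := le_of_mul_le_mul_left h10 hk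
  rw [← sub_le_iff_le_add, le_div_iff₀ hal]
  linarith

set_option maxHeartbeats 4000000 in
lemma core [NeZero n] (a : Fin n → ℝ) (ha : ClassA a) (C : ℝ) (hC : 0 < C) :
    ∃ σ : ℝ, 0 < σ ∧ σ ≤ 1 ∧ ∀ (k G c : ℝ) (e θ θ₁ θ₂ : En n) (δ : ℝ), 0 < k → 0 < G → G ≤ C →
      c ^ 2 = k * G → ‖e‖ = 1 → ‖θ‖ ≤ σ → ‖θ₁‖ ≤ σ → ‖θ₂‖ ≤ σ → 0 ≤ δ → δ ≤ σ →
      ∀ X Y : En n →L[ℝ] En n, SymOp X → SymOp Y →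
      (∀ ξ ζ, inner ℝ (X ξ) ξ - inner ℝ (Y ζ) ζ ≤ k * Hf e θ δ ξ ζ) →
      0 ≤ MT a (X + rk (c • (e + θ₁))) → MT a (Y + rk (c • (e + θ₂))) ≤ 0 → False := by
  obtain ⟨hpos, ha0, hal⟩ := ha
  set S := ∑ i, a i with hS
  have hS0 : 0 < S := lt_of_lt_of_le ha0 (Finset.single_le_sum (fun i _ => hpos i) (Finset.mem_univ _))
  set m := min (a 0) (a (lastIdx n)) with hm
  have hm0 : 0 < m := lt_min ha0 hal
  obtain ⟨τ, hτ0, hτ1, hτ2⟩ : ∃ τ : ℝ, 0 < τ ∧ τ ≤ 1/32 ∧ τ * S < m / 16 := by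
    refine ⟨min (1/32) (m / (32 * S)), by positivity, min_le_left _ _, ?_⟩
    calc min (1/32) (m / (32 * S)) * S ≤ m / (32 * S) * S :=
          mul_le_mul_of_nonneg_right (min_le_right _ _) hS0.le
      _ = m / 32 := by field_simp
      _ < m / 16 := by linarith
  refine ⟨min 1 (τ / (4 + 6 * C)), by positivity, min_le_left _ _, ?_⟩
  set σ := min 1 (τ / (4 + 6 * C)) with hσ
  have hσ0 : 0 < σ := by positivity
  have hσ1 : σ ≤ 1 := min_le_left _ _
  have hστ : (4 + 6 * C) * σ ≤ τ := by
    have := min_le_right 1 (τ / (4 + 6 * C))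
    rw [← hσ, le_div_iff₀ (by positivity)] at this
    linarith
  intro k G c e θ θ₁ θ₂ δ hk hG hGC hc he hθ hθ₁ hθ₂ hδ0 hδ X Y hX hY hH hMA hMB
  set A := X + rk (c • (e + θ₁)) with hA
  set B := Y + rk (c • (e + θ₂)) with hB
  have hAs : SymOp A := hX.add (SymOp.rk _)
  have hBs : SymOp B := hY.add (SymOp.rk _)
  have qA : ∀ ζ, inner ℝ (A ζ) ζ = inner ℝ (X ζ) ζ + k * G * (inner ℝ e ζ + inner ℝ θ₁ ζ) ^ 2 := by
    intro ζ; rw [hA, _root_.add_apply, inner_add_left, qrk, hc, inner_add_left]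
  have qB : ∀ ζ, inner ℝ (B ζ) ζ = inner ℝ (Y ζ) ζ + k * G * (inner ℝ e ζ + inner ℝ θ₂ ζ) ^ 2 := by
    intro ζ; rw [hB, _root_.add_apply, inner_add_left, qrk, hc, inner_add_left]
  have hE : ∀ ζ, |inner ℝ e ζ| ≤ ‖ζ‖ := fun ζ => by simpa [he] using abs_real_inner_le_norm e ζ
  have hGs : G * σ ≤ C * σ := mul_le_mul_of_nonneg_right hGC hσ0.le
  have hkG : 0 < k * G := mul_pos hk hG
  have hδ2 : δ ^ 2 ≤ σ := by nlinarith
  -- generic bounds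
  have b1 : ∀ (t ζ : En n), ‖t‖ ≤ σ →
      |(inner ℝ e ζ + inner ℝ t ζ) ^ 2 - (inner ℝ e ζ) ^ 2| ≤ 3 * σ * ‖ζ‖ ^ 2 := fun t ζ ht =>
    sqb (norm_nonneg ζ) (hE ζ) (inner_bd ht) hσ0.le hσ1
  have b2 : ∀ ζ : En n, (inner ℝ θ ζ) ^ 2 ≤ σ * ‖ζ‖ ^ 2 := fun ζ => by
    have h := inner_bd (ξ := ζ) hθ
    have h3 : (inner ℝ θ ζ) ^ 2 ≤ (σ * ‖ζ‖) ^ 2 :=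
      sq_le_sq' (by linarith [abs_le.1 h]) (abs_le.1 h).2
    nlinarith [sq_nonneg ‖ζ‖]
  have b3 : ∀ (t ζ : En n), ‖t‖ ≤ σ →
      |G * ((inner ℝ e ζ + inner ℝ t ζ) ^ 2 - (inner ℝ e ζ) ^ 2)| ≤ 3 * (C * σ) * ‖ζ‖ ^ 2 := by
    intro t ζ ht
    rw [abs_mul, abs_of_pos hG]
    calc _ ≤ G * (3 * σ * ‖ζ‖ ^ 2) := mul_le_mul_of_nonneg_left (b1 t ζ ht) hG.le
      _ = 3 * (G * σ) * ‖ζ‖ ^ 2 := by ring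
      _ ≤ _ := by gcongr
  have H1 : ∀ ζ, k * (-‖ζ‖ ^ 2 + (2 - 1/8 + G) * (inner ℝ e ζ) ^ 2 - τ * ‖ζ‖ ^ 2) ≤
      inner ℝ (B ζ) ζ := by
    intro ζ
    have h := hH 0 ζ
    simp only [Hf, zero_sub, norm_neg, inner_neg_right, norm_zero, inner_zero_right, map_zero] at h
    rw [qB]
    have h3 := (abs_le.1 (b3 θ₂ ζ hθ₂)).1
    have h4 : 3 * (C * σ) * ‖ζ‖ ^ 2 ≤ τ * ‖ζ‖ ^ 2 :=
      mul_le_mul_of_nonneg_right (by nlinarith) (sq_nonneg _)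
    have h5 := mul_le_mul_of_nonneg_left (h4.trans' (neg_le.1 h3)) hk.le
    nlinarith
  have H2 : ∀ ξ, inner ℝ (A ξ) ξ ≤ inner ℝ (B ξ) ξ + k * τ * ‖ξ‖ ^ 2 := by
    intro ξ
    have h := hH ξ ξ
    simp only [Hf, sub_self, inner_zero_right, norm_zero] at h
    rw [qA, qB]
    have h3 := (abs_le.1 (b3 θ₂ ξ hθ₂)).1
    have h4 := (abs_le.1 (b3 θ₁ ξ hθ₁)).2
    have h5 := b2 ξ
    have h6 : δ ^ 2 * ‖ξ‖ ^ 2 ≤ σ * ‖ξ‖ ^ 2 := mul_le_mul_of_nonneg_right hδ2 (sq_nonneg _)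
    have h7 : (4 + 6 * C) * σ * ‖ξ‖ ^ 2 ≤ τ * ‖ξ‖ ^ 2 :=
      mul_le_mul_of_nonneg_right hστ (sq_nonneg _)
    have hp2 : 0 ≤ σ * ‖ξ‖ ^ 2 := by positivity
    have h8 : 2 * δ ^ 2 * ‖ξ‖ ^ 2 + (inner ℝ θ ξ) ^ 2 + 1 / 8 * (inner ℝ θ ξ) ^ 2 +
       G * (inner ℝ e ξ + inner ℝ θ₁ ξ) ^ 2 - G * (inner ℝ e ξ + inner ℝ θ₂ ξ) ^ 2 ≤ τ * ‖ξ‖ ^ 2 := by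
      linarith
    have h9 := mul_le_mul_of_nonneg_left h8 hk.le
    linarith
  have H4 : ∀ ξ, inner ℝ (A ξ) ξ ≤ k * (‖ξ‖ ^ 2 + (1/8 + G - 2) * (inner ℝ e ξ) ^ 2 + τ * ‖ξ‖ ^ 2) := by
    intro ξ
    have h := hH ξ 0
    simp only [Hf, sub_zero, inner_zero_right, map_zero] at h
    rw [qA]
    have h3 := (abs_le.1 (b1 θ ξ hθ)).2
    have h4 := (abs_le.1 (b3 θ₁ ξ hθ₁)).2
    have h5 := b2 ξ
    have h6 : δ ^ 2 * ‖ξ‖ ^ 2 ≤ σ * ‖ξ‖ ^ 2 := mul_le_mul_of_nonneg_right hδ2 (sq_nonneg _)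
    have h7 : (4 + 6 * C) * σ * ‖ξ‖ ^ 2 ≤ τ * ‖ξ‖ ^ 2 :=
      mul_le_mul_of_nonneg_right hστ (sq_nonneg _)
    have hp : 0 ≤ C * σ * ‖ξ‖ ^ 2 := by positivity
    have hp2 : 0 ≤ σ * ‖ξ‖ ^ 2 := by positivity
    have h8 : ‖ξ‖ ^ 2 - 2 * inner ℝ e ξ ^ 2 + 2 * δ ^ 2 * ‖ξ‖ ^ 2 + inner ℝ θ ξ ^ 2 +
        1 / 8 * (inner ℝ e ξ + inner ℝ θ ξ) ^ 2 + G * (inner ℝ e ξ + inner ℝ θ₁ ξ) ^ 2 ≤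
        ‖ξ‖ ^ 2 + (1/8 + G - 2) * (inner ℝ e ξ) ^ 2 + τ * ‖ξ‖ ^ 2 := by
      linarith
    have h9 := mul_le_mul_of_nonneg_left h8 hk.le
    linarith
  have H3 : inner ℝ (A e) e - inner ℝ (B e) e ≤ k * (-4 + 4 * (1/8) + τ) := by
    have h := hH e (-e)
    have he2 : e - -e = (2:ℝ) • e := by rw [two_smul]; abel
    simp only [Hf, he2, inner_smul_right, norm_smul, he, map_neg, inner_neg_left, inner_neg_right,
      real_inner_self_eq_norm_sq] at h
    rw [qA, qB]
    have h1 := (abs_le.1 (b1 θ e hθ)).2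
    have h3 := (abs_le.1 (b3 θ₂ e hθ₂)).1
    have h4 := (abs_le.1 (b3 θ₁ e hθ₁)).2
    have h5 := b2 e
    have hee : inner ℝ e e = (1:ℝ) := by rw [real_inner_self_eq_norm_sq, he]; norm_num
    have h10 := inner_bd (ξ := e) hθ
    have h11 := (abs_le.1 h10).2
    rw [he] at h1 h3 h4 h5 h11
    rw [hee] at h1 h3 h4 ⊢
    have hn2 : ‖(2:ℝ)‖ = 2 := by norm_num
    rw [hn2] at h
    generalize inner ℝ θ e = t at *
    generalize inner ℝ θ₁ e = t₁ at *
    generalize inner ℝ θ₂ e = t₂ at *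
    have h8 : 4 - 2 * 2 ^ 2 + 2 * δ ^ 2 + t ^ 2 +
        1 / 8 * (2 + t) ^ 2 + G * (1 + t₁) ^ 2 - G * (1 + t₂) ^ 2 ≤
        -4 + 4 * (1/8) + τ := by
      linarith
    have h9 := mul_le_mul_of_nonneg_left h8 hk.le
    linarith
  -- conclusion from a gap
  have fin : ∀ j : Fin n, m ≤ a j → lam A j + k / 16 ≤ lam B j → False := by
    intro j hj hgap
    have := MT_gap a hpos hAs hBs (k * τ) (by positivity) H2 j _ hgap
    have h2 : m * (k / 16) ≤ a j * (k / 16) := mul_le_mul_of_nonneg_right hj (by positivity)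
    have h3 : k * (τ * S) < k * (m / 16) := mul_lt_mul_of_pos_left hτ2 hk
    rw [← hS] at this
    nlinarith
  have lB0 : ∀ i, -(k * (1 + τ)) ≤ lam B i := le_lam_all hBs _ fun v => by
    have := H1 v
    have h5 : 0 ≤ k * ((2 - 1/8 + G) * (inner ℝ e v) ^ 2) := by positivity
    nlinarith
  have lAn : ∀ M : ℝ, 0 ≤ M → 1/8 + G - 2 ≤ M → ∀ i, lam A i ≤ k * (1 + M + τ) := fun M hM hM' =>
    lam_le_all hAs _ fun v => by
      have := H4 v
      have h6 : (inner ℝ e v) ^ 2 ≤ ‖v‖ ^ 2 := sq_le_sq' (by linarith [abs_le.1 (hE v)]) (abs_le.1 (hE v)).2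
      have h7 : (1/8 + G - 2) * (inner ℝ e v) ^ 2 ≤ M * ‖v‖ ^ 2 := by
        calc _ ≤ M * (inner ℝ e v) ^ 2 := mul_le_mul_of_nonneg_right hM' (sq_nonneg _)
          _ ≤ _ := mul_le_mul_of_nonneg_left h6 hM
      have h8 := mul_le_mul_of_nonneg_left h7 hk.le
      nlinarith
  have hBe := H1 e
  rw [real_inner_self_eq_norm_sq, he] at hBe
  have hBl := le_lam_last hBs e he
  have hA0 := lam_zero_le hAs e he
  rcases le_or_gt (1/4) G with hG4 | hG4
  · refine fin (lastIdx n) (min_le_right _ _) ?_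
    rcases le_or_gt (1/8 + G - 2) 0 with h | h
    · have := lAn 0 le_rfl h (lastIdx n)
      nlinarith
    · have := lAn _ h.le le_rfl (lastIdx n)
      nlinarith
  · rcases le_or_gt (inner ℝ (A e) e) (k * (G - 2 + 2 * (1/8) + τ)) with h | h
    · refine fin 0 (min_le_left _ _) ?_
      have := lB0 0
      nlinarith
    · refine fin (lastIdx n) (min_le_right _ _) ?_
      have := lAn 0 le_rfl (by linarith) (lastIdx n)
      nlinarith
end Core

section Reg
variable {n : ℕ}

lemma nsub (a b : En n) : ‖a - b‖ ^ 2 = ‖a‖ ^ 2 - 2 * inner ℝ a b + ‖b‖ ^ 2 := norm_sub_sq_real a b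
lemma nadd (a b : En n) : ‖a + b‖ ^ 2 = ‖a‖ ^ 2 + 2 * inner ℝ a b + ‖b‖ ^ 2 := norm_add_sq_real a b

/-- sup-convolution -/
lemma supconv (v : En n → ℝ) (hv : Continuous v) (N : ℝ) (hN : ∀ x, |v x| ≤ N) (κ : ℝ)
    (hκ : 0 < κ) : ∃ (F : En n → ℝ) (z0 : En n → En n),
      (∀ z w, v w - κ * ‖w - z‖ ^ 2 ≤ F z) ∧ (∀ z, F z = v (z0 z) - κ * ‖z0 z - z‖ ^ 2) ∧
      (∀ z, κ * ‖z0 z - z‖ ^ 2 ≤ 2 * N) ∧ Continuous F ∧ (∀ z, |F z| ≤ N) ∧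
      (∀ z k, F z + 2 * κ * inner ℝ (z0 z - z) k - κ * ‖k‖ ^ 2 ≤ F (z + k)) := by
  have hN0 : 0 ≤ N := (abs_nonneg _).trans (hN 0)
  set R := Real.sqrt (2 * N / κ) with hR
  have hR2 : κ * R ^ 2 = 2 * N := by
    rw [hR, Real.sq_sqrt (by positivity)]; field_simp
  have hex : ∀ z : En n, ∃ z0 : En n, κ * ‖z0 - z‖ ^ 2 ≤ 2 * N ∧
      ∀ w, v w - κ * ‖w - z‖ ^ 2 ≤ v z0 - κ * ‖z0 - z‖ ^ 2 := by
    intro z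
    obtain ⟨z0, hz0, hmax⟩ := (isCompact_closedBall z R).exists_isMaxOn
      (f := fun w => v w - κ * ‖w - z‖ ^ 2) ⟨z, by simp [hR]⟩ (by fun_prop)
    have hz : v z ≤ v z0 - κ * ‖z0 - z‖ ^ 2 := by
      have := hmax (mem_closedBall_self (x := z) (by positivity : 0 ≤ R))
      simpa using this
    have h1 := abs_le.1 (hN z)
    have h2 := abs_le.1 (hN z0)
    refine ⟨z0, by linarith, fun w => ?_⟩
    by_cases hw : w ∈ closedBall z R
    · exact hmax hw
    · rw [mem_closedBall, dist_eq_norm, not_le] at hw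
      have h3 : R ^ 2 ≤ ‖w - z‖ ^ 2 := by
        have : 0 ≤ R := by positivity
        gcongr
      have h4 := mul_le_mul_of_nonneg_left h3 hκ.le
      have h5 := abs_le.1 (hN w)
      linarith
  choose z0 h0 hmax using hex
  have hsc : ∀ z k, (v (z0 z) - κ * ‖z0 z - z‖ ^ 2) + 2 * κ * inner ℝ (z0 z - z) k - κ * ‖k‖ ^ 2 ≤
      v (z0 (z + k)) - κ * ‖z0 (z + k) - (z + k)‖ ^ 2 := by
    intro z k
    have := hmax (z + k) (z0 z)
    rw [← sub_sub, nsub] at this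
    linarith
  refine ⟨fun z => v (z0 z) - κ * ‖z0 z - z‖ ^ 2, z0, fun z w => hmax z w, fun z => rfl, h0, ?_, ?_,
    hsc⟩
  · set F : En n → ℝ := fun z => v (z0 z) - κ * ‖z0 z - z‖ ^ 2 with hF
    have hb : ∀ z, ‖z0 z - z‖ ≤ R := by
      intro z
      have h1 : κ * ‖z0 z - z‖ ^ 2 ≤ κ * R ^ 2 := by rw [hR2]; exact h0 z
      exact (sq_le_sq₀ (norm_nonneg _) (by positivity : 0 ≤ R)).1 (le_of_mul_le_mul_left h1 hκ)
    have hl : ∀ z w, F z - F w ≤ 2 * κ * R * ‖w - z‖ + κ * ‖w - z‖ ^ 2 := by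
      intro z w
      have h1 := hsc z (w - z)
      rw [add_sub_cancel] at h1
      have h2 := (abs_le.1 (abs_real_inner_le_norm (z0 z - z) (w - z))).1
      have h3 := mul_le_mul_of_nonneg_right (hb z) (norm_nonneg (w - z))
      have h4 := mul_le_mul_of_nonneg_left (h3.trans' (neg_le.1 h2)) (by positivity : 0 ≤ 2 * κ)
      simp only [hF]
      linarith
    rw [continuous_iff_continuousAt]
    intro z
    rw [ContinuousAt, tendsto_iff_norm_sub_tendsto_zero]
    refine squeeze_zero (fun _ => norm_nonneg _)
      (g := fun w => 2 * κ * R * ‖w - z‖ + κ * ‖w - z‖ ^ 2) (fun w => ?_) ?_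
    · rw [Real.norm_eq_abs, abs_le]
      have h1 := hl z w
      have h2 := hl w z
      rw [norm_sub_rev] at h2
      constructor <;> linarith
    · have : Continuous fun w : En n => 2 * κ * R * ‖w - z‖ + κ * ‖w - z‖ ^ 2 := by fun_prop
      have := this.tendsto z
      simpa using this
  · intro z
    have h1 := hmax z z
    have h2 := abs_le.1 (hN z)
    have h3 := abs_le.1 (hN (z0 z))
    have h4 : 0 ≤ κ * ‖z0 z - z‖ ^ 2 := by positivity
    simp only [sub_self, norm_zero] at h1
    rw [abs_le]
    constructor <;> linarith

lemma reg (v : En n → ℝ) (hv : Continuous v) (N : ℝ) (hN : ∀ x, |v x| ≤ N) (κ : ℝ)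
    (hκ : 0 < κ) : ∃ (W : En n → ℝ) (P : En n → En n),
      (∀ x, v x ≤ W x) ∧ (∀ x, ∃ z, κ * ‖z - x‖ ^ 2 ≤ 2 * N ∧ W x ≤ v z) ∧
      (∀ x h, |W (x + h) - W x - inner ℝ (P x) h| ≤ 2 * κ * ‖h‖ ^ 2) ∧
      (∀ x c, c < 4 * κ → (∀ᶠ h in nhds (0 : En n), W (x + h) ≤ W x + inner ℝ (P x) h + c / 2 * ‖h‖ ^ 2) →
        ∃ z0, κ * ‖z0 - x‖ ^ 2 ≤ 2 * N ∧ ∀ h, v (z0 + h) - v z0 ≤ W (x + h) - W x) := by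
  have hN0 : 0 ≤ N := (abs_nonneg _).trans (hN 0)
  obtain ⟨F, z0, F1, F2, F3, F4, F5, F6⟩ := supconv v hv N hN κ hκ
  obtain ⟨H, z1, H1, H2, H3, H4, H5, H6⟩ := supconv (fun x => - F x) F4.neg N
    (fun x => by rw [abs_neg]; exact F5 x) (2 * κ) (by positivity)
  -- W = -H
  have W1 : ∀ x w, - H x ≤ F w + 2 * κ * ‖w - x‖ ^ 2 := fun x w => by
    have := H1 x w; linarith
  have W2 : ∀ x, - H x = F (z1 x) + 2 * κ * ‖z1 x - x‖ ^ 2 := fun x => by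
    have := H2 x; linarith
  -- basic lower bound on F
  have L1 : ∀ x k, F (z1 x) + 4 * κ * inner ℝ (x - z1 x) k - 2 * κ * ‖k‖ ^ 2 ≤ F (z1 x + k) := by
    intro x k
    have h1 := W1 x (z1 x + k)
    rw [W2, show z1 x + k - x = k - (x - z1 x) by abel, nsub k, real_inner_comm,
      norm_sub_rev (z1 x)] at h1
    linarith
  have L2 : ∀ x k, F (z1 x) + 4 * κ * inner ℝ (x - z1 x) k - κ * ‖k‖ ^ 2 ≤ F (z1 x + k) := by
    intro x k
    have key : ∀ t : ℝ, 0 < t → t ≤ 1 →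
        F (z1 x) + 4 * κ * inner ℝ (x - z1 x) k - κ * ‖k‖ ^ 2 - t * (κ * ‖k‖ ^ 2) ≤ F (z1 x + k) := by
      intro t ht ht1
      have h1 := L1 x (t • k)
      have h2 := F6 (z1 x + t • k) ((1 - t) • k)
      have h3 := F6 (z1 x + t • k) ((-t) • k)
      rw [show z1 x + t • k + (1 - t) • k = z1 x + k by module] at h2
      rw [show z1 x + t • k + (-t) • k = z1 x by module] at h3
      simp only [inner_smul_right, norm_smul, mul_pow, Real.norm_eq_abs, sq_abs] at h1 h2 h3
      have h4 := mul_le_mul_of_nonneg_left h2 ht.le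
      have h5 := mul_le_mul_of_nonneg_left h3 (by linarith : 0 ≤ 1 - t)
      have h6 : t * (F (z1 x) + 4 * κ * inner ℝ (x - z1 x) k - κ * ‖k‖ ^ 2 - t * (κ * ‖k‖ ^ 2)) ≤
          t * F (z1 x + k) := by linarith
      exact le_of_mul_le_mul_left h6 ht
    have hlim : Tendsto (fun t : ℝ => F (z1 x) + 4 * κ * inner ℝ (x - z1 x) k - κ * ‖k‖ ^ 2 -
        t * (κ * ‖k‖ ^ 2)) (nhdsWithin 0 (Ioi 0))
        (nhds (F (z1 x) + 4 * κ * inner ℝ (x - z1 x) k - κ * ‖k‖ ^ 2 - 0 * (κ * ‖k‖ ^ 2))) := by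
      apply tendsto_nhdsWithin_of_tendsto_nhds
      exact (Continuous.tendsto (by fun_prop) 0)
    rw [zero_mul, sub_zero] at hlim
    refine le_of_tendsto hlim ?_
    filter_upwards [Ioc_mem_nhdsGT (show (0:ℝ) < 1 by norm_num)] with t ht
    exact key t ht.1 ht.2
  -- expansion of W at x + h
  have ex : ∀ x h k : En n, 2 * κ * ‖z1 x + k - (x + h)‖ ^ 2 = 2 * κ * ‖z1 x - x‖ ^ 2 -
      4 * κ * inner ℝ (x - z1 x) k + 4 * κ * inner ℝ (x - z1 x) h + 2 * κ * ‖k - h‖ ^ 2 := by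
    intro x h k
    rw [show z1 x + k - (x + h) = (k - h) - (x - z1 x) by abel, nsub (k - h), real_inner_comm,
      inner_sub_right, norm_sub_rev (z1 x)]
    ring
  have low : ∀ x h (b : ℝ), (∀ k, F (z1 x) + 4 * κ * inner ℝ (x - z1 x) k + (b * inner ℝ h k)
      - κ * ‖k‖ ^ 2 ≤ F (z1 x + k)) → - H x + 4 * κ * inner ℝ (x - z1 x) h - 2 * κ * ‖h‖ ^ 2 +
      (2 * b - b ^ 2 / (4 * κ)) * ‖h‖ ^ 2 ≤ - H (x + h) := by
    intro x h b hb
    rw [W2 x, W2 (x + h)]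
    set k := z1 (x + h) - z1 x with hk
    have hz : z1 (x + h) = z1 x + k := by rw [hk]; abel
    rw [hz, ex]
    have h1 := hb k
    have h2 : 0 ≤ κ * ‖k - (2 - b / (2 * κ)) • h‖ ^ 2 := by positivity
    rw [nsub, inner_smul_right, norm_smul, mul_pow, Real.norm_eq_abs, sq_abs] at h2
    rw [nsub k h]
    rw [real_inner_comm k h] at h1
    have h3 : κ * (‖k‖ ^ 2 - 2 * ((2 - b / (2 * κ)) * inner ℝ k h) + (2 - b / (2 * κ)) ^ 2 * ‖h‖ ^ 2)
      = κ * ‖k‖ ^ 2 - 4 * κ * inner ℝ k h + b * inner ℝ k h + (4 * κ - 2 * b + b ^ 2 / (4 * κ)) * ‖h‖ ^ 2 := by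
      field_simp; ring
    rw [h3] at h2
    linarith
  refine ⟨fun x => - H x, fun x => (4 * κ) • (x - z1 x), ?_, ?_, ?_, ?_⟩
  · intro x
    have h1 := F1 (z1 x) x
    have : (0:ℝ) ≤ κ * ‖z1 x - x‖ ^ 2 := by positivity
    rw [norm_sub_rev] at h1
    simp only [W2]
    linarith
  · intro x
    refine ⟨z0 x, F3 x, ?_⟩
    have h1 := W1 x x
    rw [F2] at h1
    have : (0:ℝ) ≤ κ * ‖z0 x - x‖ ^ 2 := by positivity
    simp at h1
    linarith
  · intro x h
    rw [inner_smul_left, abs_le]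
    simp only [RCLike.conj_to_real]
    constructor
    · have := low x h 0 (fun k => by have := L2 x k; linarith)
      simp at this
      linarith
    · have h1 := W1 (x + h) (z1 x + 0)
      rw [ex, W2 x, zero_sub, norm_neg] at *
      simp only [add_zero, inner_zero_right] at h1
      have := W2 x
      linarith
  · intro x c hc hev
    -- q = P
    set d : En n := (2 * κ) • (z0 (z1 x) - z1 x) - (4 * κ) • (x - z1 x) with hd
    have hd0 : d = 0 := by
      by_contra hne
      have hcont : Tendsto (fun s : ℝ => s • d) (nhdsWithin 0 (Ioi 0)) (nhds 0) := by
        apply tendsto_nhdsWithin_of_tendsto_nhds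
        have : Continuous fun s : ℝ => s • d := by fun_prop
        simpa using this.tendsto 0
      have h1 := hcont.eventually hev
      have h2 : ∀ᶠ s : ℝ in nhdsWithin 0 (Ioi 0), s ∈ Ioc (0:ℝ) (1 / (4 * κ)) :=
        Ioc_mem_nhdsGT (by positivity)
      obtain ⟨s, hs1, hs2, hs3⟩ := (h1.and h2).exists
      have hs4 : 4 * κ * s ≤ 1 := by
        rw [le_div_iff₀ (by positivity)] at hs3; linarith
      have h3 := low x (s • d) (4 * κ) (fun k => by
        have e1 := L2 x k
        have e2 := F6 (z1 x) k
        have e3 : inner ℝ d k = 2 * κ * inner ℝ (z0 (z1 x) - z1 x) k - 4 * κ * inner ℝ (x - z1 x) k := by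
          rw [hd, inner_sub_left, inner_smul_left, inner_smul_left]; simp
        have e4 : inner ℝ (s • d) k = s * inner ℝ d k := by rw [inner_smul_left]; simp
        rw [e4, e3]
        have e5 := mul_le_mul_of_nonneg_left e1 (by linarith : 0 ≤ 1 - 4 * κ * s)
        have e6 := mul_le_mul_of_nonneg_left e2 (by positivity : 0 ≤ 4 * κ * s)
        linarith)
      have h4 : (2 * (4 * κ) - (4 * κ) ^ 2 / (4 * κ)) = 4 * κ := by field_simp; ring
      rw [h4] at h3
      rw [inner_smul_left] at hs1
      simp only [RCLike.conj_to_real] at hs1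
      have h5 : 0 < ‖s • d‖ ^ 2 := by
        have : s • d ≠ 0 := smul_ne_zero hs2.ne' hne
        positivity
      have h6 : (4 * κ - c) * ‖s • d‖ ^ 2 ≤ 0 := by linarith
      have h7 := mul_pos (sub_pos.2 hc) h5
      linarith
    have hrel : z0 (z1 x) - z1 x = (2:ℝ) • (z0 (z1 x) - x) ∧ z1 x - x = - (z0 (z1 x) - x) := by
      rw [hd] at hd0
      have h1 : (2 * κ) • (z0 (z1 x) - z1 x - (2:ℝ) • (x - z1 x)) = 0 := by
        rw [← hd0]; module
      have h2 := (smul_eq_zero.1 h1).resolve_left (by positivity)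
      constructor
      · have : (2:ℝ) • (z0 (z1 x) - x) - (z0 (z1 x) - z1 x) = z0 (z1 x) - z1 x - (2:ℝ) • (x - z1 x) := by
          module
        rw [h2] at this
        exact (sub_eq_zero.1 this).symm
      · have : z1 x - x + (z0 (z1 x) - x) = z0 (z1 x) - z1 x - (2:ℝ) • (x - z1 x) := by
          module
        rw [h2] at this
        exact eq_neg_of_add_eq_zero_left this
    have hWx : - H x = v (z0 (z1 x)) - 2 * κ * ‖z0 (z1 x) - x‖ ^ 2 := by
      rw [W2, F2, hrel.1, hrel.2, norm_neg, norm_smul, mul_pow]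
      norm_num
      ring
    refine ⟨z0 (z1 x), ?_, ?_⟩
    · have := F3 (z1 x)
      rw [hrel.1, norm_smul, mul_pow] at this
      norm_num at this
      have h0 : 0 ≤ κ * ‖z0 (z1 x) - x‖ ^ 2 := by positivity
      linarith
    · intro h
      have key : ∀ y w, v w - 2 * κ * ‖w - y‖ ^ 2 ≤ - H y := by
        intro y w
        have h1 := F1 (z1 y) w
        rw [W2]
        have h2 : ‖w - z1 y‖ ^ 2 ≤ 2 * ‖w - y‖ ^ 2 + 2 * ‖z1 y - y‖ ^ 2 := by
          have e1 := nsub (w - y) (z1 y - y)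
          have e2 := nadd (w - y) (z1 y - y)
          rw [show w - y - (z1 y - y) = w - z1 y by abel] at e1
          have := sq_nonneg ‖w - y + (z1 y - y)‖
          linarith
        have h3 := mul_le_mul_of_nonneg_left h2 hκ.le
        linarith
      have h1 := key (x + h) (z0 (z1 x) + h)
      rw [add_sub_add_right_eq_sub] at h1
      linarith
end Reg

section C11
variable {n : ℕ}

/-- real-linear version of the inner product map -/
noncomputable def iL : En n →L[ℝ] (En n →L[ℝ] ℝ) :=
  LinearMap.toContinuousLinearMap
    { toFun := fun p => innerSL ℝ p
      map_add' := fun p q => by ext x; simp [inner_add_left]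
      map_smul' := fun c p => by ext x; simp [inner_smul_left] }

@[simp] lemma iL_apply (p h : En n) : iL p h = inner ℝ p h := rfl

lemma iL_norm (p : En n) : ‖iL p‖ = ‖p‖ := innerSL_apply_norm ℝ p

variable {W : En n → ℝ} {P : En n → En n} {K : ℝ}

lemma c11_hasFDerivAt (hK : 0 < K) (h : ∀ x h, |W (x + h) - W x - inner ℝ (P x) h| ≤ K * ‖h‖ ^ 2) (x : En n) :
    HasFDerivAt W (iL (P x)) x := by
  rw [hasFDerivAt_iff_isLittleO_nhds_zero]
  rw [Asymptotics.isLittleO_iff]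
  intro c hc
  filter_upwards [ball_mem_nhds (0 : En n) (show 0 < c / K by positivity)] with v hv
  rw [mem_ball_zero_iff, lt_div_iff₀ hK] at hv
  refine (h x v).trans ?_
  rw [sq, ← mul_assoc]
  exact mul_le_mul_of_nonneg_right (by linarith) (norm_nonneg _)

lemma c11_lipschitz (hK : 0 < K) (h : ∀ x h, |W (x + h) - W x - inner ℝ (P x) h| ≤ K * ‖h‖ ^ 2)
    (x y : En n) : ‖P y - P x‖ ≤ 6 * K * ‖y - x‖ := by
  set k := y - x with hk
  have hy : y = x + k := by rw [hk]; abel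
  set d := P y - P x with hd
  have key : ∀ v, inner ℝ d v ≤ 3 * K * (‖k‖ ^ 2 + ‖v‖ ^ 2) := by
    intro v
    have h1 := (abs_le.1 (h x (k + v))).2
    have h2 := (abs_le.1 (h x k)).1
    have h3 := (abs_le.1 (h y v)).1
    rw [← add_assoc, ← hy, inner_add_right] at h1
    rw [← hy] at h2
    have h4 : ‖k + v‖ ^ 2 ≤ 2 * ‖k‖ ^ 2 + 2 * ‖v‖ ^ 2 := by
      have := sq_nonneg ‖k - v‖
      rw [nsub] at this
      rw [nadd]; linarith
    have h5 := mul_le_mul_of_nonneg_left h4 hK.le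
    rw [hd, inner_sub_left]
    linarith
  have h1 := key ((1 / (6 * K)) • d)
  rw [inner_smul_right, real_inner_self_eq_norm_sq, norm_smul, mul_pow, Real.norm_eq_abs, sq_abs] at h1
  have h2 : ‖d‖ ^ 2 ≤ (6 * K * ‖k‖) ^ 2 := by
    have h3 := mul_le_mul_of_nonneg_left h1 (show 0 ≤ 12 * K by positivity)
    have e1 : 12 * K * (1 / (6 * K) * ‖d‖ ^ 2) = 2 * ‖d‖ ^ 2 := by field_simp; ring
    have e2 : 12 * K * (3 * K * (‖k‖ ^ 2 + (1 / (6 * K)) ^ 2 * ‖d‖ ^ 2)) = (6 * K * ‖k‖) ^ 2 + ‖d‖ ^ 2 := by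
      field_simp; ring
    linarith
  exact (sq_le_sq₀ (norm_nonneg _) (by positivity)).1 h2

lemma c11_symm (hK : 0 < K) (h : ∀ x h, |W (x + h) - W x - inner ℝ (P x) h| ≤ K * ‖h‖ ^ 2) (x : En n)
    (X : En n →L[ℝ] En n) (hX : HasFDerivAt P X x) : SymOp X := by
  have h1 : HasFDerivAt (fun x => iL (P x)) (iL.comp X) x := iL.hasFDerivAt.comp x hX
  intro v w
  have := second_derivative_symmetric (c11_hasFDerivAt hK h) h1 v w
  simp only [ContinuousLinearMap.comp_apply, iL_apply] at this
  rw [this, real_inner_comm]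

lemma c11_expand (hK : 0 < K) (h : ∀ x h, |W (x + h) - W x - inner ℝ (P x) h| ≤ K * ‖h‖ ^ 2) (x : En n)
    (X : En n →L[ℝ] En n) (hX : HasFDerivAt P X x) (η : ℝ) (hη : 0 < η) :
    ∀ᶠ v in nhds (0 : En n),
      |W (x + v) - W x - inner ℝ (P x) v - 1 / 2 * inner ℝ (X v) v| ≤ η * ‖v‖ ^ 2 := by
  have hs := c11_symm hK h x X hX
  have h1 := hasFDerivAt_iff_isLittleO_nhds_zero.1 hX
  have h2 := (Asymptotics.isLittleO_iff.1 h1) hη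
  obtain ⟨ε, hε, hball⟩ := Metric.eventually_nhds_iff_ball.1 h2
  filter_upwards [ball_mem_nhds (0 : En n) hε] with v hv
  have hder : ∀ v, HasFDerivAt (fun v => W (x + v) - W x - inner ℝ (P x) v - 1 / 2 * inner ℝ (X v) v)
      (iL (P (x + v) - P x - X v)) v := by
    intro v
    have e1 : HasFDerivAt (fun v => W (x + v)) (iL (P (x + v))) v := by
      have := (c11_hasFDerivAt hK h (x + v)).comp v ((hasFDerivAt_id v).const_add x)
      exact this
    have e2 : HasFDerivAt (fun v : En n => inner ℝ (P x) v) (iL (P x)) v := (iL (P x)).hasFDerivAt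
    have e3 := (X.hasFDerivAt (x := v)).inner ℝ (hasFDerivAt_id v)
    have e4 := ((e1.sub_const (W x)).sub e2).sub (e3.const_mul (1 / 2))
    refine e4.congr_fderiv ?_
    ext u
    simp [fderivInnerCLM_apply, inner_sub_left, hs u v]
    rw [real_inner_comm (X v) u]; ring
  have := Convex.norm_image_sub_le_of_norm_hasFDerivWithin_le (s := closedBall (0 : En n) ‖v‖)
    (f' := fun v => iL (P (x + v) - P x - X v)) (x := 0) (y := v) (C := η * ‖v‖)
    (fun w _ => (hder w).hasFDerivWithinAt) (fun w hw => by
      rw [iL_norm]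
      rw [mem_closedBall_zero_iff] at hw
      have : w ∈ ball (0 : En n) ε := by
        rw [mem_ball_zero_iff] at hv ⊢; linarith
      exact (hball w this).trans (mul_le_mul_of_nonneg_left hw hη.le))
    (convex_closedBall _ _) (by simp) (by simp)
  simp only [add_zero, sub_self, inner_zero_right, map_zero, mul_zero, sub_zero,
    Real.norm_eq_abs] at this
  rw [sq, ← mul_assoc]
  exact this

/-- second derivative test, necessary condition -/
lemma second_nec (f f' : ℝ → ℝ) (c : ℝ) (hf : ∀ᶠ t in nhds (0:ℝ), HasDerivAt f (f' t) t)
    (hf' : HasDerivAt f' c 0) (hmax : IsLocalMax f 0) : c ≤ 0 := by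
  by_contra hc
  push Not at hc
  have e1 : deriv f =ᶠ[nhds 0] f' := hf.mono fun t ht => ht.deriv
  have e2 : deriv (deriv f) 0 = c := by rw [e1.deriv_eq]; exact hf'.deriv
  have hmin : IsLocalMin f 0 := isLocalMin_of_deriv_deriv_pos (by rw [e2]; exact hc)
    hmax.deriv_eq_zero hf.self_of_nhds.continuousAt
  have e3 : f =ᶠ[nhds 0] fun _ => f 0 := by
    filter_upwards [hmax, hmin] with t h1 h2
    exact le_antisymm h1 h2
  have e4 : deriv f =ᶠ[nhds 0] fun _ => 0 := by
    have := e3.deriv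
    simpa using this
  have e5 := e4.deriv_eq
  rw [e2] at e5
  simp at e5
  linarith
end C11

section Pen
variable {n : ℕ}

/-- the doubling penalty `L (‖x-y‖/(1-‖x‖²))^{1/8}` -/
noncomputable def Phi (L : ℝ) (x y : En n) : ℝ :=
  L * Real.exp (1 / 8 * (1 / 2 * Real.log (‖x - y‖ ^ 2) - Real.log (1 - ‖x‖ ^ 2)))

noncomputable def PhiD (L : ℝ) (x y ξ ζ : En n) : ℝ :=
  Phi L x y / 8 * (inner ℝ (x - y) (ξ - ζ) / ‖x - y‖ ^ 2 + 2 * inner ℝ x ξ / (1 - ‖x‖ ^ 2))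

noncomputable def PhiX (L : ℝ) (x y : En n) : En n :=
  (Phi L x y / 8) • ((1 / ‖x - y‖ ^ 2) • (x - y) + (2 / (1 - ‖x‖ ^ 2)) • x)

noncomputable def PhiY (L : ℝ) (x y : En n) : En n :=
  (Phi L x y / 8) • ((- (1 / ‖x - y‖ ^ 2)) • (x - y))

noncomputable def PhiDD (L : ℝ) (x y ξ ζ : En n) : ℝ :=
  Phi L x y / 8 * (‖ξ - ζ‖ ^ 2 / ‖x - y‖ ^ 2 - 2 * (inner ℝ (x - y) (ξ - ζ)) ^ 2 / (‖x - y‖ ^ 2) ^ 2 +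
    2 * ‖ξ‖ ^ 2 / (1 - ‖x‖ ^ 2) + 4 * (inner ℝ x ξ) ^ 2 / (1 - ‖x‖ ^ 2) ^ 2 +
    1 / 8 * (inner ℝ (x - y) (ξ - ζ) / ‖x - y‖ ^ 2 + 2 * inner ℝ x ξ / (1 - ‖x‖ ^ 2)) ^ 2)

lemma PhiD_eq (L : ℝ) (x y ξ ζ : En n) :
    PhiD L x y ξ ζ = inner ℝ (PhiX L x y) ξ + inner ℝ (PhiY L x y) ζ := by
  simp only [PhiD, PhiX, PhiY, inner_smul_left, inner_add_left, inner_sub_right,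
    RCLike.conj_to_real]
  ring

lemma Phi_pos {L : ℝ} (hL : 0 < L) (x y : En n) : 0 < Phi L x y := by unfold Phi; positivity

lemma Phi_pow {L : ℝ} (x y : En n) (h : x ≠ y) (hx : 0 < 1 - ‖x‖ ^ 2) :
    Phi L x y ^ 8 = L ^ 8 * (‖x - y‖ / (1 - ‖x‖ ^ 2)) := by
  have hr : 0 < ‖x - y‖ := norm_pos_iff.2 (sub_ne_zero.2 h)
  rw [Phi, mul_pow, ← Real.exp_nat_mul]
  congr 1
  rw [show ((8:ℕ):ℝ) * (1 / 8 * (1 / 2 * Real.log (‖x - y‖ ^ 2) - Real.log (1 - ‖x‖ ^ 2))) =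
    Real.log ‖x - y‖ - Real.log (1 - ‖x‖ ^ 2) by
      rw [Real.log_pow]; push_cast; ring]
  rw [Real.exp_sub, Real.exp_log hr, Real.exp_log hx]

lemma hd_norm (x ξ : En n) (t : ℝ) :
    HasDerivAt (fun t : ℝ => ‖x + t • ξ‖ ^ 2) (2 * inner ℝ (x + t • ξ) ξ) t := by
  have h : HasDerivAt (fun t : ℝ => x + t • ξ) ξ t := by
    have := ((hasDerivAt_id t).smul_const ξ).const_add x
    simpa using this
  exact h.norm_sq

lemma hd_inner (x ξ : En n) (t : ℝ) :
    HasDerivAt (fun t : ℝ => inner ℝ (x + t • ξ) ξ) (‖ξ‖ ^ 2) t := by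
  have h : HasDerivAt (fun t : ℝ => inner ℝ x ξ + t * ‖ξ‖ ^ 2) (‖ξ‖ ^ 2) t := by
    have := ((hasDerivAt_id t).mul_const (‖ξ‖ ^ 2)).const_add (inner ℝ x ξ)
    simpa using this
  refine h.congr_of_eventuallyEq (Eventually.of_forall fun s => ?_)
  simp only [inner_add_left, inner_smul_left, real_inner_self_eq_norm_sq, RCLike.conj_to_real]

lemma line_sub (x y ξ ζ : En n) (t : ℝ) : (x + t • ξ) - (y + t • ζ) = (x - y) + t • (ξ - ζ) := by
  module

lemma Phi_hasDerivAt (L : ℝ) (x y ξ ζ : En n) (t : ℝ) (h : x + t • ξ ≠ y + t • ζ)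
    (hx : 0 < 1 - ‖x + t • ξ‖ ^ 2) :
    HasDerivAt (fun t : ℝ => Phi L (x + t • ξ) (y + t • ζ))
      (PhiD L (x + t • ξ) (y + t • ζ) ξ ζ) t := by
  have hz : ‖(x - y) + t • (ξ - ζ)‖ ^ 2 ≠ 0 := by
    rw [← line_sub]
    have := norm_pos_iff.2 (sub_ne_zero.2 h)
    positivity
  simp only [PhiD, Phi, line_sub]
  have h1 := (hd_norm (x - y) (ξ - ζ) t).log hz
  have h2 := ((hd_norm x ξ t).const_sub 1).log hx.ne'
  have h3 := (((h1.const_mul (1 / 2)).sub h2).const_mul (1 / 8)).exp.const_mul L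
  refine h3.congr_deriv ?_
  simp only [Pi.sub_apply]
  ring

lemma PhiD_hasDerivAt (L : ℝ) (x y ξ ζ : En n) (h : x ≠ y)
    (hx : 0 < 1 - ‖x‖ ^ 2) :
    HasDerivAt (fun t : ℝ => PhiD L (x + t • ξ) (y + t • ζ) ξ ζ) (PhiDD L x y ξ ζ) 0 := by
  have h0 := Phi_hasDerivAt L x y ξ ζ 0 (by simpa using h) (by simpa using hx)
  have hz : ‖(x - y) + (0:ℝ) • (ξ - ζ)‖ ^ 2 ≠ 0 := by
    rw [zero_smul, add_zero]
    have := norm_pos_iff.2 (sub_ne_zero.2 h)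
    positivity
  have hx' : 1 - ‖x + (0:ℝ) • ξ‖ ^ 2 ≠ 0 := by simpa using hx.ne'
  have h1 := (hd_inner (x - y) (ξ - ζ) 0).div (hd_norm (x - y) (ξ - ζ) 0) hz
  have h2 := ((hd_inner x ξ 0).const_mul 2).div ((hd_norm x ξ 0).const_sub 1) hx'
  have h3 := (h0.div_const 8).mul (h1.add h2)
  have h4 : (fun t : ℝ => PhiD L (x + t • ξ) (y + t • ζ) ξ ζ) = fun t : ℝ =>
      Phi L (x + t • ξ) (y + t • ζ) / 8 * (inner ℝ ((x - y) + t • (ξ - ζ)) (ξ - ζ) /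
        ‖(x - y) + t • (ξ - ζ)‖ ^ 2 + 2 * inner ℝ (x + t • ξ) ξ / (1 - ‖x + t • ξ‖ ^ 2)) := by
    funext t
    simp only [PhiD, line_sub]
  rw [h4]
  refine h3.congr_deriv ?_
  simp only [zero_smul, add_zero, PhiDD, PhiD, Pi.add_apply, Pi.div_apply] at *
  field_simp
  ring

lemma PhiDD_le {L : ℝ} (hL : 0 < L) (x y ξ ζ : En n) (h : x ≠ y)
    (hx : 0 < 1 - ‖x‖ ^ 2) :
    PhiDD L x y ξ ζ ≤ (Phi L x y / 8 / ‖x - y‖ ^ 2) *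
      Hf ((1 / ‖x - y‖) • (x - y)) ((2 * ‖x - y‖ / (1 - ‖x‖ ^ 2)) • x) (‖x - y‖ / (1 - ‖x‖ ^ 2)) ξ ζ := by
  have hr : 0 < ‖x - y‖ := norm_pos_iff.2 (sub_ne_zero.2 h)
  have hd1 : 1 - ‖x‖ ^ 2 ≤ 1 := by nlinarith [sq_nonneg ‖x‖]
  have hP := Phi_pos hL x y
  simp only [PhiDD, Hf, inner_smul_left, RCLike.conj_to_real]
  set r := ‖x - y‖
  set d := 1 - ‖x‖ ^ 2
  set A := inner ℝ (x - y) (ξ - ζ)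
  set B := inner ℝ x ξ
  have e0 : ∀ H : ℝ, Phi L x y / 8 / r ^ 2 * H = Phi L x y / 8 * (H / r ^ 2) := fun H => by ring
  rw [e0]
  refine mul_le_mul_of_nonneg_left ?_ (by positivity)
  have e1 : 2 * ‖ξ‖ ^ 2 / d ≤ 2 * ‖ξ‖ ^ 2 / d ^ 2 := by
    apply div_le_div_of_nonneg_left (by positivity) (by positivity)
    nlinarith
  have e2 : (‖ξ - ζ‖ ^ 2 - 2 * (1 / r * A) ^ 2 + 2 * (r / d) ^ 2 * ‖ξ‖ ^ 2 + (2 * r / d * B) ^ 2 +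
      1 / 8 * (1 / r * A + 2 * r / d * B) ^ 2) / r ^ 2 =
      ‖ξ - ζ‖ ^ 2 / r ^ 2 - 2 * A ^ 2 / (r ^ 2) ^ 2 + 2 * ‖ξ‖ ^ 2 / d ^ 2 + 4 * B ^ 2 / d ^ 2 +
        1 / 8 * (A / r ^ 2 + 2 * B / d) ^ 2 := by
    field_simp
    ring
  rw [e2]
  linarith

lemma Phi_contDiffAt (L : ℝ) (p : En n × En n) (h : p.1 ≠ p.2) (hx : 0 < 1 - ‖p.1‖ ^ 2) :
    ContDiffAt ℝ 1 (fun p : En n × En n => Phi L p.1 p.2) p := by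
  have hz : ‖p.1 - p.2‖ ^ 2 ≠ 0 := by
    have := norm_pos_iff.2 (sub_ne_zero.2 h)
    positivity
  have h1 : ContDiffAt ℝ 1 (fun p : En n × En n => ‖p.1 - p.2‖ ^ 2) p :=
    (contDiffAt_fst.sub contDiffAt_snd).norm_sq ℝ
  have h2 : ContDiffAt ℝ 1 (fun p : En n × En n => 1 - ‖p.1‖ ^ 2) p :=
    contDiffAt_const.sub (contDiffAt_fst.norm_sq ℝ)
  exact contDiffAt_const.mul
    ((contDiffAt_const.mul ((contDiffAt_const.mul (h1.log hz)).sub (h2.log hx.ne'))).exp)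

lemma PhiXY_contDiffAt (L : ℝ) (p : En n × En n) (h : p.1 ≠ p.2) (hx : 0 < 1 - ‖p.1‖ ^ 2) :
    ContDiffAt ℝ 1 (fun p : En n × En n => (PhiX L p.1 p.2, PhiY L p.1 p.2)) p := by
  have hz : ‖p.1 - p.2‖ ^ 2 ≠ 0 := by
    have := norm_pos_iff.2 (sub_ne_zero.2 h)
    positivity
  have h1 : ContDiffAt ℝ 1 (fun p : En n × En n => ‖p.1 - p.2‖ ^ 2) p :=
    (contDiffAt_fst.sub contDiffAt_snd).norm_sq ℝ
  have h2 : ContDiffAt ℝ 1 (fun p : En n × En n => 1 - ‖p.1‖ ^ 2) p :=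
    contDiffAt_const.sub (contDiffAt_fst.norm_sq ℝ)
  have h3 := (Phi_contDiffAt L p h hx).div_const 8
  have h4 : ContDiffAt ℝ 1 (fun p : En n × En n => p.1 - p.2) p := contDiffAt_fst.sub contDiffAt_snd
  have h5 : ContDiffAt ℝ 1 (fun p : En n × En n => 1 / ‖p.1 - p.2‖ ^ 2) p :=
    contDiffAt_const.div h1 hz
  have h6 : ContDiffAt ℝ 1 (fun p : En n × En n => 2 / (1 - ‖p.1‖ ^ 2)) p :=
    contDiffAt_const.div h2 hx.ne'
  exact (h3.smul ((h5.smul h4).add (h6.smul contDiffAt_fst))).prodMk (h3.smul (h5.neg.smul h4))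
end Pen

section Jen
variable {n : ℕ}

lemma lip_null (Γ : En n × En n → En n × En n) (S : Set (En n × En n))
    (hΓ : ∀ p ∈ S, ∃ K : NNReal, ∃ t ∈ nhds p, LipschitzOnWith K Γ t)
    (hS : (volume : Measure (En n × En n)) S = 0) :
    (volume : Measure (En n × En n)) (Γ '' S) = 0 := by
  set d : ℝ := ((Module.finrank ℝ (En n × En n) : ℕ) : ℝ)
  have hd : 0 ≤ d := Nat.cast_nonneg _
  have : ((volume : Measure (En n)).prod (volume : Measure (En n))).IsAddHaarMeasure := inferInstance
  have hvol : (volume : Measure (En n × En n)).IsAddHaarMeasure := this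
  have : (Measure.hausdorffMeasure d : Measure (En n × En n)).IsAddHaarMeasure :=
    isAddHaarMeasure_hausdorffMeasure
  have hS' : (Measure.hausdorffMeasure d : Measure (En n × En n)) S = 0 :=
    Measure.absolutelyContinuous_isAddHaarMeasure _ (volume : Measure (En n × En n)) hS
  apply Measure.absolutelyContinuous_isAddHaarMeasure _ (Measure.hausdorffMeasure d : Measure (En n × En n))
  have hΓ' : ∀ p : En n × En n, ∃ (K : NNReal) (t : Set (En n × En n)), p ∈ S → t ∈ nhds p ∧ LipschitzOnWith K Γ t := by
    intro p
    by_cases hp : p ∈ S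
    · obtain ⟨K, t, h1, h2⟩ := hΓ p hp
      exact ⟨K, t, fun _ => ⟨h1, h2⟩⟩
    · exact ⟨0, ∅, fun h => absurd h hp⟩
  choose K t ht using hΓ'
  obtain ⟨c, hcS, hc, hcov⟩ := TopologicalSpace.countable_cover_nhdsWithin (f := t) (s := S)
    (fun x hx => mem_nhdsWithin_of_mem_nhds (ht x hx).1)
  have hsub : Γ '' S ⊆ ⋃ x ∈ c, Γ '' (t x ∩ S) := by
    rintro _ ⟨p, hp, rfl⟩
    obtain ⟨x, hx, hpx⟩ := mem_iUnion₂.1 (hcov hp)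
    exact mem_iUnion₂.2 ⟨x, hx, p, ⟨hpx, hp⟩, rfl⟩
  refine measure_mono_null hsub ((measure_biUnion_null_iff hc).2 fun x hx => ?_)
  have h1 := ((ht x (hcS hx)).2.mono (inter_subset_left (t := S))).hausdorffMeasure_image_le hd
  have h2 : (Measure.hausdorffMeasure d : Measure (En n × En n)) (t x ∩ S) = 0 :=
    measure_mono_null inter_subset_right hS'
  rw [h2, mul_zero] at h1
  exact le_antisymm h1 (zero_le)

lemma jensen (P Q : En n → En n) (KP : NNReal) (hP : LipschitzWith KP P) (hQ : LipschitzWith KP Q)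
    (Γ : En n × En n → En n × En n) (S : Set (En n × En n))
    (hΓ : ∀ p ∈ S, ∃ K : NNReal, ∃ t ∈ nhds p, LipschitzOnWith K Γ t)
    (ρ : ℝ) (hρ : 0 < ρ) (hsurj : ball (0 : En n × En n) ρ ⊆ Γ '' S) :
    ∃ p ∈ S, DifferentiableAt ℝ P p.1 ∧ DifferentiableAt ℝ Q p.2 := by
  by_contra hcon
  push Not at hcon
  have h1 : ∀ᵐ p : En n × En n, DifferentiableAt ℝ P p.1 :=
    Measure.quasiMeasurePreserving_fst.ae (hP.ae_differentiableAt (μ := volume))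
  have h2 : ∀ᵐ p : En n × En n, DifferentiableAt ℝ Q p.2 :=
    Measure.quasiMeasurePreserving_snd.ae (hQ.ae_differentiableAt (μ := volume))
  have hS : (volume : Measure (En n × En n)) S = 0 := by
    have h3 := h1.and h2
    rw [ae_iff] at h3
    refine measure_mono_null ?_ h3
    intro p hp
    simp only [mem_ofPred_eq, not_and]
    exact hcon p hp
  have h4 := measure_mono_null hsurj (lip_null Γ S hΓ hS)
  exact (isOpen_ball.measure_pos volume ⟨0, mem_ball_self hρ⟩).ne' h4
end Jen

section Visc
variable {n : ℕ}

noncomputable def psi (x0 p : En n) (T : En n →L[ℝ] En n) (b : ℝ) (x : En n) : ℝ :=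
  Real.exp (b + inner ℝ p (x - x0) + 1 / 2 * inner ℝ (T (x - x0)) (x - x0))

lemma psi_contDiff (x0 p : En n) (T : En n →L[ℝ] En n) (b : ℝ) : ContDiff ℝ 2 (psi x0 p T b) := by
  have h1 : ContDiff ℝ 2 (fun x : En n => x - x0) := contDiff_id.sub contDiff_const
  have h2 : ContDiff ℝ 2 (fun x : En n => T (x - x0)) := T.contDiff.comp h1
  exact ((contDiff_const.add (contDiff_const.inner ℝ h1)).add
    (contDiff_const.mul (h2.inner ℝ h1))).exp

lemma psi_fderiv (x0 p : En n) (T : En n →L[ℝ] En n) (hT : SymOp T) (b : ℝ) (x : En n) :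
    HasFDerivAt (psi x0 p T b) (psi x0 p T b x • iL (p + T (x - x0))) x := by
  have e0 : HasFDerivAt (fun x : En n => x - x0) (ContinuousLinearMap.id ℝ (En n)) x :=
    (hasFDerivAt_id x).sub_const x0
  have e2 : HasFDerivAt (fun x : En n => inner ℝ p (x - x0)) (iL p) x :=
    ((iL p).hasFDerivAt.comp x e0).congr_fderiv (by ext u; simp)
  have e3 : HasFDerivAt (fun x : En n => T (x - x0)) T x :=
    (T.hasFDerivAt.comp x e0).congr_fderiv (by ext u; simp)
  have e4 := e3.inner ℝ e0
  have e5 := ((e2.const_add b).add (e4.const_mul (1 / 2))).exp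
  refine e5.congr_fderiv ?_
  ext u
  simp [psi, fderivInnerCLM_apply, hT u, inner_add_left]
  rw [real_inner_comm _ u, inner_sub_left]; ring

lemma psi_hess (x0 p : En n) (T : En n →L[ℝ] En n) (hT : SymOp T) (b : ℝ) :
    hess (psi x0 p T b) x0 = matOf (Real.exp b • (T + rk p)) := by
  have h1 : fderiv ℝ (psi x0 p T b) = fun x => psi x0 p T b x • iL (p + T (x - x0)) :=
    funext fun x => (psi_fderiv x0 p T hT b x).fderiv
  have hb : psi x0 p T b x0 = Real.exp b := by simp [psi]
  have e0 : HasFDerivAt (fun x : En n => x - x0) (ContinuousLinearMap.id ℝ (En n)) x0 :=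
    (hasFDerivAt_id x0).sub_const x0
  have e3 : HasFDerivAt (fun x : En n => p + T (x - x0)) T x0 :=
    ((T.hasFDerivAt.comp x0 e0).const_add p).congr_fderiv (by ext u; simp)
  have e4 : HasFDerivAt (fun x : En n => iL (p + T (x - x0))) (iL.comp T) x0 := iL.hasFDerivAt.comp x0 e3
  have e5 := (psi_fderiv x0 p T hT b x0).fun_smul e4
  ext i j
  rw [hess, iteratedFDeriv_two_apply, h1, e5.fderiv]
  simp [hb, matOf, rk_apply, inner_add_left, inner_smul_left]
  ring

/-- restricted viscosity inequality -/
def TestSub (a : Fin n → ℝ) (u : En n → ℝ) : Prop := ∀ x0 p T b, SymOp T →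
  IsLocalMax (fun x => u x - psi x0 p T b x) x0 → 0 ≤ MT a (Real.exp b • (T + rk p))
def TestSup (a : Fin n → ℝ) (u : En n → ℝ) : Prop := ∀ x0 p T b, SymOp T →
  IsLocalMin (fun x => u x - psi x0 p T b x) x0 → MT a (Real.exp b • (T + rk p)) ≤ 0

def SubP (a : Fin n → ℝ) (w : En n → ℝ) : Prop := ∀ x p X, SymOp X →
  (∀ η : ℝ, 0 < η → ∀ᶠ h in nhds (0 : En n),
    w (x + h) ≤ w x + inner ℝ p h + 1 / 2 * inner ℝ (X h) h + η * ‖h‖ ^ 2) → 0 ≤ MT a (X + rk p)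
def SupP (a : Fin n → ℝ) (w : En n → ℝ) : Prop := ∀ x p X, SymOp X →
  (∀ η : ℝ, 0 < η → ∀ᶠ h in nhds (0 : En n),
    w x + inner ℝ p h + 1 / 2 * inner ℝ (X h) h - η * ‖h‖ ^ 2 ≤ w (x + h)) → MT a (X + rk p) ≤ 0

lemma testSub_of (a : Fin n → ℝ) (u : En n → ℝ) (c : ℝ)
    (h : IsViscSubsol a Set.univ (fun _ => 0) u) : TestSub a (fun x => u x + c) := by
  intro x0 p T b hT hm
  have h1 := h x0 (mem_univ _) (fun x => psi x0 p T b x - c) ((psi_contDiff x0 p T b).sub contDiff_const)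
    (by
      rw [isLocalMaxOn_univ_iff]
      refine hm.congr (Eventually.of_forall fun x => ?_)
      simp only; ring)
  have h2 : hess (fun x => psi x0 p T b x - c) x0 = hess (psi x0 p T b) x0 := by
    ext i j
    rw [hess, hess, iteratedFDeriv_two_apply, iteratedFDeriv_two_apply]
    have : fderiv ℝ (fun x => psi x0 p T b x - c) = fderiv ℝ (psi x0 p T b) := by
      funext x; exact fderiv_sub_const c
    rw [this]
  rw [h2, psi_hess x0 p T hT] at h1
  exact h1

lemma testSup_of (a : Fin n → ℝ) (u : En n → ℝ) (c : ℝ)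
    (h : IsViscSupersol a Set.univ (fun _ => 0) u) : TestSup a (fun x => u x + c) := by
  intro x0 p T b hT hm
  have h1 := h x0 (mem_univ _) (fun x => psi x0 p T b x - c) ((psi_contDiff x0 p T b).sub contDiff_const)
    (by
      rw [isLocalMinOn_univ_iff]
      refine hm.congr (Eventually.of_forall fun x => ?_)
      simp only; ring)
  have h2 : hess (fun x => psi x0 p T b x - c) x0 = hess (psi x0 p T b) x0 := by
    ext i j
    rw [hess, hess, iteratedFDeriv_two_apply, iteratedFDeriv_two_apply]
    have : fderiv ℝ (fun x => psi x0 p T b x - c) = fderiv ℝ (psi x0 p T b) := by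
      funext x; exact fderiv_sub_const c
    rw [this]
  rw [h2, psi_hess x0 p T hT] at h1
  exact h1

lemma hess_neg (x0 p : En n) (T : En n →L[ℝ] En n) (hT : SymOp T) (b c : ℝ) :
    hess (fun x => c - psi x0 p T b x) x0 = matOf (-(Real.exp b • (T + rk p))) := by
  have h0 := psi_hess x0 p T hT b
  ext i j
  have h0' := congrFun (congrFun h0 i) j
  rw [hess, iteratedFDeriv_two_apply] at h0' ⊢
  have : fderiv ℝ (fun x => c - psi x0 p T b x) = fun x => - fderiv ℝ (psi x0 p T b) x := by
    funext x; exact fderiv_const_sub c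
  rw [this, fderiv_fun_neg, _root_.neg_apply, _root_.neg_apply, h0']
  simp only [matOf, _root_.neg_apply, inner_neg_left]

lemma testSup_neg (a : Fin n → ℝ) (u : En n → ℝ) (c : ℝ)
    (h : IsViscSubsol a Set.univ (fun _ => 0) u) : TestSup (fun i => a i.rev) (fun x => c - u x) := by
  intro x0 p T b hT hm
  have h1 := h x0 (mem_univ _) (fun x => c - psi x0 p T b x) (contDiff_const.sub (psi_contDiff x0 p T b))
    (by
      rw [isLocalMaxOn_univ_iff]
      refine hm.neg.congr (Eventually.of_forall fun x => ?_)
      simp only; ring)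
  rw [hess_neg x0 p T hT] at h1
  have h2 := MT_neg a ((hT.add (SymOp.rk p)).smul (Real.exp b))
  rw [MT] at h2
  linarith

lemma testSub_neg (a : Fin n → ℝ) (u : En n → ℝ) (c : ℝ)
    (h : IsViscSupersol a Set.univ (fun _ => 0) u) : TestSub (fun i => a i.rev) (fun x => c - u x) := by
  intro x0 p T b hT hm
  have h1 := h x0 (mem_univ _) (fun x => c - psi x0 p T b x) (contDiff_const.sub (psi_contDiff x0 p T b))
    (by
      rw [isLocalMinOn_univ_iff]
      refine hm.neg.congr (Eventually.of_forall fun x => ?_)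
      simp only; ring)
  rw [hess_neg x0 p T hT] at h1
  have h2 := MT_neg a ((hT.add (SymOp.rk p)).smul (Real.exp b))
  rw [MT] at h2
  linarith

lemma ev_shift {q : En n → Prop} {x : En n} (h : ∀ᶠ v in nhds (0 : En n), q (x + v)) :
    ∀ᶠ y in nhds x, q y := by
  have ht : Tendsto (fun y : En n => y - x) (nhds x) (nhds 0) := by
    have : Continuous fun y : En n => y - x := by fun_prop
    simpa using this.tendsto x
  filter_upwards [ht.eventually h] with y hy
  simpa using hy

lemma quad_shift (X : En n →L[ℝ] En n) (s : ℝ) (h : En n) :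
    1 / 2 * inner ℝ ((X + (2 * s) • (1 : En n →L[ℝ] En n)) h) h = 1 / 2 * inner ℝ (X h) h + s * ‖h‖ ^ 2 := by
  rw [_root_.add_apply, _root_.smul_apply, inner_add_left, inner_smul_left]
  simp only [RCLike.conj_to_real, one_apply_eq_self, real_inner_self_eq_norm_sq]
  ring

lemma small_eta {A S : ℝ} (hS : 0 ≤ S) (h : ∀ η : ℝ, 0 < η → A ≤ 2 * η * S) : A ≤ 0 := by
  refine le_of_forall_pos_le_add fun ε hε => ?_
  have := h (ε / (2 * (S + 1))) (by positivity)
  have h2 : 2 * (ε / (2 * (S + 1))) * S ≤ ε := by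
    rw [show 2 * (ε / (2 * (S + 1))) * S = ε * (S / (S + 1)) by field_simp]
    have : S / (S + 1) ≤ 1 := by rw [div_le_one (by positivity)]; linarith
    nlinarith
  linarith

lemma subP_log (a : Fin n → ℝ) (ha : ∀ i, 0 ≤ a i) (u : En n → ℝ) (hpos : ∀ x, 0 < u x)
    (h : TestSub a u) : SubP a (fun x => Real.log (u x)) := by
  intro x p X hX hexp
  have key : ∀ η : ℝ, 0 < η → - MT a (X + rk p) ≤ 2 * η * ∑ i, a i := by
    intro η hη
    have hTs : SymOp (X + (2 * η) • (1 : En n →L[ℝ] En n)) := hX.add (SymOp.one.smul _)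
    have h1 := h x p (X + (2 * η) • (1 : En n →L[ℝ] En n)) (Real.log (u x)) hTs (by
      refine ev_shift (q := fun y => u y - psi x p _ _ y ≤ u x - psi x p _ _ x) ?_
      filter_upwards [hexp η hη] with v hv
      simp only [psi, add_sub_cancel_left, sub_self, map_zero, inner_zero_right, mul_zero, add_zero,
        Real.exp_log (hpos x), quad_shift]
      rw [sub_nonpos, ← Real.log_le_iff_le_exp (hpos _)]
      linarith)
    have hTr := hTs.add (SymOp.rk p)
    rw [MT_smul a hTr (Real.exp_pos _)] at h1
    have h2 := nonneg_of_mul_nonneg_right h1 (Real.exp_pos _)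
    have h3 := MT_le a ha hTr (hX.add (SymOp.rk p)) (2 * η) (fun v => by
      simp only [_root_.add_apply, _root_.smul_apply, inner_add_left, inner_smul_left,
        RCLike.conj_to_real, one_apply_eq_self, real_inner_self_eq_norm_sq]
      linarith)
    linarith
  have := small_eta (Finset.sum_nonneg fun i _ => ha i) key
  linarith

lemma supP_log (a : Fin n → ℝ) (ha : ∀ i, 0 ≤ a i) (u : En n → ℝ) (hpos : ∀ x, 0 < u x)
    (h : TestSup a u) : SupP a (fun x => Real.log (u x)) := by
  intro x p X hX hexp
  have key : ∀ η : ℝ, 0 < η → MT a (X + rk p) ≤ 2 * η * ∑ i, a i := by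
    intro η hη
    have hTs : SymOp (X + (2 * (-η)) • (1 : En n →L[ℝ] En n)) := hX.add (SymOp.one.smul _)
    have h1 := h x p (X + (2 * (-η)) • (1 : En n →L[ℝ] En n)) (Real.log (u x)) hTs (by
      refine ev_shift (q := fun y => u x - psi x p _ _ x ≤ u y - psi x p _ _ y) ?_
      filter_upwards [hexp η hη] with v hv
      simp only [psi, add_sub_cancel_left, sub_self, map_zero, inner_zero_right, mul_zero, add_zero,
        Real.exp_log (hpos x), quad_shift]
      rw [sub_nonneg, ← Real.le_log_iff_exp_le (hpos _)]
      linarith)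
    have hTr := hTs.add (SymOp.rk p)
    rw [MT_smul a hTr (Real.exp_pos _)] at h1
    have h2 := nonpos_of_mul_nonpos_right h1 (Real.exp_pos _)
    have h3 := MT_le a ha (hX.add (SymOp.rk p)) hTr (2 * η) (fun v => by
      simp only [_root_.add_apply, _root_.smul_apply, inner_add_left, inner_smul_left,
        RCLike.conj_to_real, one_apply_eq_self, real_inner_self_eq_norm_sq]
      linarith)
    linarith
  exact small_eta (Finset.sum_nonneg fun i _ => ha i) key

lemma scale_rk (R : ℝ) (hR : R ≠ 0) (p : En n) (X : En n →L[ℝ] En n) :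
    (1 / R ^ 2) • (X + rk p) = (1 / R ^ 2) • X + rk ((1 / R) • p) := by
  ext1 v
  simp only [_root_.add_apply, _root_.smul_apply, rk_apply, inner_smul_left, RCLike.conj_to_real,
    smul_add, smul_smul]
  congr 2
  field_simp

lemma subP_scale (a : Fin n → ℝ) (w : En n → ℝ) (R : ℝ) (hR : 0 < R) (h : SubP a w) :
    SubP a (fun x => w (R • x)) := by
  intro x p X hX hexp
  have hX' := hX.smul (1 / R ^ 2)
  have h1 := h (R • x) ((1 / R) • p) ((1 / R ^ 2) • X) hX' (fun η hη => by
    have ht : Tendsto (fun v : En n => (1 / R) • v) (nhds 0) (nhds 0) := by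
      have : Continuous fun v : En n => (1 / R) • v := by fun_prop
      simpa using this.tendsto 0
    filter_upwards [ht.eventually (hexp (η * R ^ 2) (by positivity))] with v hv
    rw [smul_add, smul_smul, mul_one_div_cancel hR.ne', one_smul] at hv
    refine hv.trans (le_of_eq ?_)
    simp only [_root_.smul_apply, map_smul, inner_smul_left, inner_smul_right, RCLike.conj_to_real,
      norm_smul, Real.norm_eq_abs, mul_pow, sq_abs]
    field_simp)
  rw [← scale_rk R hR.ne', MT_smul a (hX.add (SymOp.rk p)) (by positivity)] at h1
  exact nonneg_of_mul_nonneg_right h1 (by positivity)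

lemma supP_scale (a : Fin n → ℝ) (w : En n → ℝ) (R : ℝ) (hR : 0 < R) (h : SupP a w) :
    SupP a (fun x => w (R • x)) := by
  intro x p X hX hexp
  have hX' := hX.smul (1 / R ^ 2)
  have h1 := h (R • x) ((1 / R) • p) ((1 / R ^ 2) • X) hX' (fun η hη => by
    have ht : Tendsto (fun v : En n => (1 / R) • v) (nhds 0) (nhds 0) := by
      have : Continuous fun v : En n => (1 / R) • v := by fun_prop
      simpa using this.tendsto 0
    filter_upwards [ht.eventually (hexp (η * R ^ 2) (by positivity))] with v hv
    rw [smul_add, smul_smul, mul_one_div_cancel hR.ne', one_smul] at hv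
    refine (le_of_eq ?_).trans hv
    simp only [_root_.smul_apply, map_smul, inner_smul_left, inner_smul_right, RCLike.conj_to_real,
      norm_smul, Real.norm_eq_abs, mul_pow, sq_abs]
    field_simp)
  rw [← scale_rk R hR.ne', MT_smul a (hX.add (SymOp.rk p)) (by positivity)] at h1
  exact nonpos_of_mul_nonpos_right h1 (by positivity)
end Visc

section MainA
variable {n : ℕ}

lemma line_hd (x ξ : En n) (t : ℝ) : HasDerivAt (fun t : ℝ => x + t • ξ) ξ t := by
  have := ((hasDerivAt_id t).smul_const ξ).const_add x
  simpa using this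

lemma PhiDD_bound {L : ℝ} (hL : 0 < L) (x y : En n) {r0 d0 M : ℝ} (hr0 : 0 < r0) (hd0 : 0 < d0)
    (hr : r0 ≤ ‖x - y‖) (hd : d0 ≤ 1 - ‖x‖ ^ 2) (hM : Phi L x y ≤ M) :
    (∀ ξ, PhiDD L x y ξ 0 ≤ M * (1 / r0 ^ 2 + 2 / d0 + 4 / d0 ^ 2 + (1 / r0 + 2 / d0) ^ 2) * ‖ξ‖ ^ 2) ∧
    (∀ ζ, PhiDD L x y 0 ζ ≤ M * (1 / r0 ^ 2 + 2 / d0 + 4 / d0 ^ 2 + (1 / r0 + 2 / d0) ^ 2) * ‖ζ‖ ^ 2) := by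
  have hΦ := Phi_pos hL x y
  set r := ‖x - y‖ with hrdef
  set d := 1 - ‖x‖ ^ 2 with hddef
  have hrp : 0 < r := hr0.trans_le hr
  have hdp : 0 < d := hd0.trans_le hd
  have hx1 : ‖x‖ ≤ 1 := by
    have h1 : ‖x‖ ^ 2 ≤ 1 ^ 2 := by rw [one_pow]; linarith
    exact le_of_sq_le_sq h1 (by norm_num)
  have i1 : 1 / r ≤ 1 / r0 := one_div_le_one_div_of_le hr0 hr
  have i2 : 1 / d ≤ 1 / d0 := one_div_le_one_div_of_le hd0 hd
  set A := 1 / r with hA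
  set B := 1 / d with hB
  have hA0 : 0 < A := by positivity
  have hB0 : 0 < B := by positivity
  set A0 := 1 / r0 with hA0'
  set B0 := 1 / d0 with hB0'
  have hA2 : A ^ 2 ≤ A0 ^ 2 := by gcongr
  have hB2 : B ^ 2 ≤ B0 ^ 2 := by gcongr
  have hrepl : 1 / r0 ^ 2 + 2 / d0 + 4 / d0 ^ 2 + (A0 + 2 / d0) ^ 2 =
      A0 ^ 2 + 2 * B0 + 4 * B0 ^ 2 + (A0 + 2 * B0) ^ 2 := by
    rw [hA0', hB0']; field_simp
  rw [hrepl]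
  have hAB : (A + 2 * B) ^ 2 ≤ (A0 + 2 * B0) ^ 2 := by gcongr
  have fin : ∀ (s T : ℝ), 0 ≤ s → T ≤ (A ^ 2 + 2 * B + 4 * B ^ 2 + (A + 2 * B) ^ 2) * s →
      Phi L x y / 8 * T ≤ M * (A0 ^ 2 + 2 * B0 + 4 * B0 ^ 2 + (A0 + 2 * B0) ^ 2) * s := by
    intro s T hs hT
    have h1 : T ≤ (A0 ^ 2 + 2 * B0 + 4 * B0 ^ 2 + (A0 + 2 * B0) ^ 2) * s :=
      hT.trans (mul_le_mul_of_nonneg_right (by linarith) hs)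
    have h2 : 0 ≤ (A0 ^ 2 + 2 * B0 + 4 * B0 ^ 2 + (A0 + 2 * B0) ^ 2) * s := by positivity
    calc Phi L x y / 8 * T ≤ Phi L x y / 8 * ((A0 ^ 2 + 2 * B0 + 4 * B0 ^ 2 + (A0 + 2 * B0) ^ 2) * s) := by
          gcongr
      _ ≤ M * ((A0 ^ 2 + 2 * B0 + 4 * B0 ^ 2 + (A0 + 2 * B0) ^ 2) * s) := by
          apply mul_le_mul_of_nonneg_right _ h2; linarith
      _ = _ := by ring
  constructor
  · intro ξ
    rw [PhiDD]
    apply fin _ _ (sq_nonneg _)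
    have c1 : |inner ℝ (x - y) ξ| ≤ r * ‖ξ‖ := abs_real_inner_le_norm _ _
    have c2 : |inner ℝ x ξ| ≤ ‖ξ‖ := (abs_real_inner_le_norm _ _).trans (by nlinarith [norm_nonneg ξ])
    set s := ‖ξ‖
    have hs : 0 ≤ s := norm_nonneg ξ
    simp only [sub_zero]
    set α := inner ℝ (x - y) ξ
    set β := inner ℝ x ξ
    have e1 : s ^ 2 / r ^ 2 = A ^ 2 * s ^ 2 := by rw [hA]; field_simp
    have e2 : 0 ≤ 2 * α ^ 2 / (r ^ 2) ^ 2 := by positivity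
    have e3 : 2 * s ^ 2 / d = 2 * B * s ^ 2 := by rw [hB]; field_simp
    have e4 : 4 * β ^ 2 / d ^ 2 ≤ 4 * B ^ 2 * s ^ 2 := by
      rw [show 4 * β ^ 2 / d ^ 2 = 4 * B ^ 2 * β ^ 2 by rw [hB]; field_simp]
      have : β ^ 2 ≤ s ^ 2 := by rw [← sq_abs β]; gcongr
      gcongr
    have e5 : (α / r ^ 2 + 2 * β / d) ^ 2 ≤ (A + 2 * B) ^ 2 * s ^ 2 := by
      rw [← mul_pow, ← sq_abs]
      gcongr
      calc |α / r ^ 2 + 2 * β / d| ≤ |α / r ^ 2| + |2 * β / d| := abs_add_le _ _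
        _ = |α| / r ^ 2 + 2 * |β| / d := by
            rw [abs_div, abs_div, abs_mul, abs_of_pos hdp, abs_of_pos (pow_pos hrp 2), abs_two]
        _ ≤ (r * s) / r ^ 2 + 2 * s / d := by gcongr
        _ = _ := by rw [hA, hB]; field_simp
    have e6 : 0 ≤ (α / r ^ 2 + 2 * β / d) ^ 2 := sq_nonneg _
    linarith
  · intro ζ
    rw [PhiDD]
    apply fin _ _ (sq_nonneg _)
    have c1 : |inner ℝ (x - y) ζ| ≤ r * ‖ζ‖ := abs_real_inner_le_norm _ _
    simp only [zero_sub, norm_neg, inner_neg_right, norm_zero, inner_zero_right]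
    set s := ‖ζ‖
    have hs : 0 ≤ s := norm_nonneg ζ
    set α := inner ℝ (x - y) ζ
    have e1 : s ^ 2 / r ^ 2 = A ^ 2 * s ^ 2 := by rw [hA]; field_simp
    have e2 : 0 ≤ 2 * (-α) ^ 2 / (r ^ 2) ^ 2 := by positivity
    have e5 : (-α / r ^ 2) ^ 2 ≤ A ^ 2 * s ^ 2 := by
      rw [← mul_pow, ← sq_abs]
      gcongr
      calc |-α / r ^ 2| = |α| / r ^ 2 := by
            rw [abs_div, abs_neg, abs_of_pos (pow_pos hrp 2)]
        _ ≤ (r * s) / r ^ 2 := by gcongr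
        _ = _ := by rw [hA]; field_simp
    have e6 : 0 ≤ (-α / r ^ 2) ^ 2 := sq_nonneg _
    have e7 : A ^ 2 * s ^ 2 ≤ (A + 2 * B) ^ 2 * s ^ 2 := by
      gcongr; linarith
    have e8 : 0 ≤ 2 * B * s ^ 2 := by positivity
    have e9 : 0 ≤ 4 * B ^ 2 * s ^ 2 := by positivity
    have e10 : ((0:ℝ) ^ 2) = 0 := by norm_num
    rw [e10, mul_zero, mul_zero, zero_div, zero_div, add_zero, add_zero, add_zero]
    linarith

/-- order conditions at a local max -/
lemma order_cond {L K : ℝ} (hK : 0 < K) (W W' : En n → ℝ) (P P' : En n → En n)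
    (hW : ∀ x h, |W (x + h) - W x - inner ℝ (P x) h| ≤ K * ‖h‖ ^ 2)
    (hW' : ∀ x h, |W' (x + h) - W' x - inner ℝ (P' x) h| ≤ K * ‖h‖ ^ 2)
    (x y p q : En n) (hxy : x ≠ y) (hx : 0 < 1 - ‖x‖ ^ 2)
    (hmax : IsLocalMax (fun z : En n × En n => W z.1 + W' z.2 - Phi L z.1 z.2 -
      (inner ℝ p z.1 + inner ℝ q z.2)) (x, y)) :
    P x - PhiX L x y = p ∧ P' y - PhiY L x y = q ∧
    ∀ X X' : En n →L[ℝ] En n, HasFDerivAt P X x → HasFDerivAt P' X' y → ∀ ξ ζ,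
      inner ℝ (X ξ) ξ + inner ℝ (X' ζ) ζ ≤ PhiDD L x y ξ ζ := by
  have lc : ∀ (x ξ : En n), Continuous (fun t : ℝ => x + t • ξ) := fun x ξ => by fun_prop
  have hloc : ∀ ξ ζ : En n, IsLocalMax (fun t : ℝ => W (x + t • ξ) + W' (y + t • ζ)
      - Phi L (x + t • ξ) (y + t • ζ) - (inner ℝ p (x + t • ξ) + inner ℝ q (y + t • ζ))) 0 := by
    intro ξ ζ
    have hc : Continuous (fun t : ℝ => ((x + t • ξ, y + t • ζ) : En n × En n)) :=
      (lc x ξ).prodMk (lc y ζ)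
    have h0 := hc.tendsto 0
    simp only [zero_smul, add_zero] at h0
    have := h0.eventually hmax
    filter_upwards [this] with t ht
    simpa using ht
  have hdw : ∀ (W : En n → ℝ) (P : En n → En n), (∀ x h, |W (x + h) - W x - inner ℝ (P x) h| ≤ K * ‖h‖ ^ 2) →
      ∀ x ξ t, HasDerivAt (fun t : ℝ => W (x + t • ξ)) (inner ℝ (P (x + t • ξ)) ξ) t := by
    intro W P h x ξ t
    have := (c11_hasFDerivAt hK h (x + t • ξ)).comp_hasDerivAt t (line_hd x ξ t)
    rwa [iL_apply] at this
  have hdi : ∀ (p x ξ : En n) (t : ℝ), HasDerivAt (fun t : ℝ => inner ℝ p (x + t • ξ)) (inner ℝ p ξ) t := by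
    intro p x ξ t
    have := (iL p).hasFDerivAt.comp_hasDerivAt t (line_hd x ξ t)
    rw [iL_apply] at this
    exact this
  have hder : ∀ ξ ζ : En n, ∀ᶠ t in nhds (0 : ℝ), HasDerivAt (fun t : ℝ => W (x + t • ξ) + W' (y + t • ζ)
      - Phi L (x + t • ξ) (y + t • ζ) - (inner ℝ p (x + t • ξ) + inner ℝ q (y + t • ζ)))
      (inner ℝ (P (x + t • ξ)) ξ + inner ℝ (P' (y + t • ζ)) ζ - PhiD L (x + t • ξ) (y + t • ζ) ξ ζ
        - (inner ℝ p ξ + inner ℝ q ζ)) t := by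
    intro ξ ζ
    have e1 : ∀ᶠ t in nhds (0 : ℝ), x + t • ξ ≠ y + t • ζ :=
      (isOpen_ne_fun (lc x ξ) (lc y ζ)).mem_nhds (by simpa using hxy)
    have e2 : ∀ᶠ t in nhds (0 : ℝ), 0 < 1 - ‖x + t • ξ‖ ^ 2 := by
      have hc : Continuous fun t : ℝ => 1 - ‖x + t • ξ‖ ^ 2 := by fun_prop
      exact (hc.tendsto 0).eventually (lt_mem_nhds (by simpa using hx))
    filter_upwards [e1, e2] with t h1 h2
    exact (((hdw W P hW x ξ t).add (hdw W' P' hW' y ζ t)).sub (Phi_hasDerivAt L x y ξ ζ t h1 h2)).sub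
      ((hdi p x ξ t).add (hdi q y ζ t))
  have h1 : ∀ ξ ζ : En n, inner ℝ (P x - PhiX L x y - p) ξ + inner ℝ (P' y - PhiY L x y - q) ζ = 0 := by
    intro ξ ζ
    have := (hloc ξ ζ).hasDerivAt_eq_zero (hder ξ ζ).self_of_nhds
    simp only [zero_smul, add_zero, PhiD_eq] at this
    simp only [inner_sub_left]
    linarith
  refine ⟨?_, ?_, ?_⟩
  · have := h1 (P x - PhiX L x y - p) 0
    rw [inner_zero_right, add_zero] at this
    exact sub_eq_zero.1 (inner_self_eq_zero.1 this)
  · have := h1 0 (P' y - PhiY L x y - q)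
    rw [inner_zero_right, zero_add] at this
    exact sub_eq_zero.1 (inner_self_eq_zero.1 this)
  · intro X X' hX hX' ξ ζ
    have hdP : ∀ (P : En n → En n) (x : En n) (X : En n →L[ℝ] En n), HasFDerivAt P X x → ∀ ξ,
        HasDerivAt (fun t : ℝ => inner ℝ (P (x + t • ξ)) ξ) (inner ℝ (X ξ) ξ) 0 := by
      intro P x X hX ξ
      have hX0 : HasFDerivAt P X (x + (0 : ℝ) • ξ) := by simpa using hX
      have h2 := hX0.comp_hasDerivAt (0 : ℝ) (line_hd x ξ 0)
      have h3 := (iL ξ).hasFDerivAt.comp_hasDerivAt (0 : ℝ) h2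
      simp only [iL_apply] at h3
      rw [real_inner_comm] at h3
      refine h3.congr_of_eventuallyEq (Eventually.of_forall fun t => ?_)
      simp [real_inner_comm]
    have h2 := second_nec _ _ _ (hder ξ ζ)
      ((((hdP P x X hX ξ).add (hdP P' y X' hX' ζ)).sub (PhiD_hasDerivAt L x y ξ ζ hxy hx)).sub
        (hasDerivAt_const (0 : ℝ) (inner ℝ p ξ + inner ℝ q ζ))) (hloc ξ ζ)
    linarith

/-- transfer of second order information to `v` -/
lemma transfer {κ c0 N : ℝ} (hκ : 0 < κ) (hc : c0 + 1 < 4 * κ) (v W : En n → ℝ) (P : En n → En n)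
    (h3 : ∀ x h, |W (x + h) - W x - inner ℝ (P x) h| ≤ 2 * κ * ‖h‖ ^ 2)
    (h4 : ∀ x c, c < 4 * κ → (∀ᶠ h in nhds (0 : En n), W (x + h) ≤ W x + inner ℝ (P x) h + c / 2 * ‖h‖ ^ 2) →
        ∃ z0, κ * ‖z0 - x‖ ^ 2 ≤ 2 * N ∧ ∀ h, v (z0 + h) - v z0 ≤ W (x + h) - W x)
    (x : En n) (X : En n →L[ℝ] En n) (hX : HasFDerivAt P X x) (hXc : ∀ ξ, inner ℝ (X ξ) ξ ≤ c0 * ‖ξ‖ ^ 2) :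
    ∃ z0, κ * ‖z0 - x‖ ^ 2 ≤ 2 * N ∧ ∀ η : ℝ, 0 < η → ∀ᶠ h in nhds (0 : En n),
      v (z0 + h) ≤ v z0 + inner ℝ (P x) h + 1 / 2 * inner ℝ (X h) h + η * ‖h‖ ^ 2 := by
  have hK : 0 < 2 * κ := by positivity
  obtain ⟨z0, hz, hz'⟩ := h4 x (c0 + 1) hc (by
    filter_upwards [c11_expand hK h3 x X hX (1 / 2) (by norm_num)] with h hh
    have := (abs_le.1 hh).2
    have := hXc h
    linarith)
  refine ⟨z0, hz, fun η hη => ?_⟩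
  filter_upwards [c11_expand hK h3 x X hX η hη] with h hh
  have := (abs_le.1 hh).2
  have := hz' h
  linarith
end MainA

section MainB
variable {n : ℕ}

lemma concl [NeZero n] (a : Fin n → ℝ) (ha : ClassA a) : ∃ L σ : ℝ, 0 < L ∧ 0 < σ ∧ σ ≤ 1 ∧
    ∀ (x y p q : En n) (X X' : En n →L[ℝ] En n) (ω : ℝ), x ≠ y → 0 < 1 - ‖x‖ ^ 2 → 0 ≤ ω → ω ≤ σ / 2 →
      3 * (Phi L x y / 8 * ω) ≤ 1 → ‖x - y‖ * ‖p‖ ≤ ω * (Phi L x y / 8) →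
      ‖x - y‖ * ‖q‖ ≤ ω * (Phi L x y / 8) → SymOp X → SymOp X' →
      (∀ ξ ζ, inner ℝ (X ξ) ξ + inner ℝ (X' ζ) ζ ≤ PhiDD L x y ξ ζ) →
      0 ≤ MT a (X + rk (p + PhiX L x y)) → MT a (-X' + rk (-(q + PhiY L x y))) ≤ 0 → False := by
  set C := 2 * (∑ i, a i) / a (lastIdx n) + 1 with hC
  have hS0 : 0 ≤ ∑ i, a i := Finset.sum_nonneg fun i _ => ha.1 i
  have hal := ha.2.2
  have hC0 : 0 < C := by rw [hC]; positivity
  obtain ⟨σ, hσ0, hσ1, hcore⟩ := core a ha C hC0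
  have hL : 0 < 32 * C / σ := by positivity
  refine ⟨32 * C / σ, σ, hL, hσ0, hσ1, ?_⟩
  set L := 32 * C / σ with hLdef
  intro x y p q X X' ω hxy hx hω0 hω hGω hp hq hX hX' hH hM1 hM2
  set r := ‖x - y‖ with hr
  set d := 1 - ‖x‖ ^ 2 with hd
  set G := Phi L x y / 8 with hG
  have hr0 : 0 < r := norm_pos_iff.2 (sub_ne_zero.2 hxy)
  have hG0 : 0 < G := by have := Phi_pos hL x y; positivity
  have hY : SymOp (-X') := hX'.neg
  have hx1 : ‖x‖ ≤ 1 := by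
    have h1 : ‖x‖ ^ 2 ≤ 1 ^ 2 := by rw [one_pow]; linarith
    exact le_of_sq_le_sq h1 (by norm_num)
  have hk : 0 < G / r ^ 2 := by positivity
  have hc : (G / r) ^ 2 = G / r ^ 2 * G := by field_simp
  have he : ‖(1 / r) • (x - y)‖ = 1 := by
    rw [norm_smul, ← hr, Real.norm_of_nonneg (by positivity)]; field_simp
  have hH' : ∀ ξ ζ, inner ℝ (X ξ) ξ - inner ℝ ((-X') ζ) ζ ≤ G / r ^ 2 *
      Hf ((1 / r) • (x - y)) ((2 * r / d) • x) (r / d) ξ ζ := by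
    intro ξ ζ
    have h1 := (hH ξ ζ).trans (PhiDD_le hL x y ξ ζ hxy hx)
    rw [_root_.neg_apply, inner_neg_left]
    linarith
  have e1 : p + PhiX L x y = (G / r) • ((1 / r) • (x - y) + ((2 * r / d) • x + (r / G) • p)) := by
    rw [PhiX, ← hG, ← hr, ← hd]
    simp only [smul_add, smul_smul]
    rw [show G / r * (1 / r) = G * (1 / r ^ 2) by field_simp,
      show G / r * (2 * r / d) = G * (2 / d) by field_simp, show G / r * (r / G) = 1 by field_simp, one_smul]
    abel
  have e2 : -(q + PhiY L x y) = (G / r) • ((1 / r) • (x - y) + (-(r / G)) • q) := by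
    rw [PhiY, ← hG, ← hr]
    simp only [smul_add, smul_smul]
    rw [show G / r * (1 / r) = G * (1 / r ^ 2) by field_simp,
      show G / r * (-(r / G)) = -1 by field_simp, mul_neg, neg_smul, neg_smul, one_smul]
    abel
  have n1 : ‖(r / G) • p‖ ≤ ω := by
    rw [norm_smul, Real.norm_of_nonneg (by positivity), div_mul_eq_mul_div, div_le_iff₀ hG0]; exact hp
  have n2 : ‖(-(r / G)) • q‖ ≤ ω := by
    rw [neg_smul, norm_neg, norm_smul, Real.norm_of_nonneg (by positivity), div_mul_eq_mul_div,
      div_le_iff₀ hG0]; exact hq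
  rw [e1] at hM1
  rw [e2] at hM2
  have hGC : G ≤ C := core_G a ha hk hG0 hc he hω0 (by linarith) hGω n2 (-X') hY (fun ζ => by
    have := hH' 0 ζ
    rw [map_zero, inner_zero_left, zero_sub] at this
    exact this) hM2
  have hδ : r / d ≤ σ / 4 := by
    have h1 := Phi_pow (L := L) x y hxy hx
    rw [← hr, ← hd, show Phi L x y = 8 * G by rw [hG]; ring] at h1
    have h2 : (8 * G) ^ 8 ≤ (L * (σ / 4)) ^ 8 := by
      have h9 : L * (σ / 4) = 8 * C := by rw [hLdef]; field_simp; norm_num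
      rw [h9]
      gcongr
    rw [h1, mul_pow] at h2
    have h3 := le_of_mul_le_mul_left h2 (by positivity)
    refine h3.trans ?_
    exact pow_le_of_le_one (by positivity) (by linarith) (by norm_num)
  have hδ0 : 0 ≤ r / d := by positivity
  have n3 : ‖(2 * r / d) • x‖ ≤ σ / 2 := by
    rw [norm_smul, Real.norm_of_nonneg (by positivity), show 2 * r / d = 2 * (r / d) by ring]
    nlinarith
  refine hcore (G / r ^ 2) G (G / r) _ _ _ _ (r / d) hk hG0 hGC hc he (by linarith)
    ((norm_add_le _ _).trans (by linarith)) (n2.trans (by linarith)) hδ0 (by linarith) X (-X') hX hY hH' hM1 hM2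

/-- geometric setup -/
lemma setup (w : En n → ℝ) (hw : Continuous w) (hw0 : ∀ x, 0 ≤ w x) {L : ℝ} (hL : 0 < L) (x0 y0 : En n)
    (hxy : x0 ≠ y0) (hx0 : ‖x0‖ < 1) (hbad : Phi L x0 y0 < w x0 - w y0) :
    ∃ R r0 d0 m : ℝ, 0 < R ∧ 0 < r0 ∧ 0 < d0 ∧ 0 < m ∧
      (∃ x y : En n, (d0 ≤ 1 - ‖x‖ ^ 2 ∧ r0 ≤ ‖x - y‖ ∧ ‖y‖ ≤ R) ∧ m ≤ w x - w y - Phi L x y) ∧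
      1 ≤ R ∧
      ∀ x y : En n, d0 ≤ 1 - ‖x‖ ^ 2 → r0 ≤ ‖x - y‖ → ‖y‖ ≤ R → m / 2 ≤ w x - w y - Phi L x y →
        d0 < 1 - ‖x‖ ^ 2 ∧ r0 < ‖x - y‖ ∧ ‖y‖ < R := by
  obtain ⟨W1, hW1⟩ : ∃ W1 : ℝ, ∀ x : En n, ‖x‖ ≤ 1 → w x ≤ W1 := by
    obtain ⟨B, hB⟩ := ((isCompact_closedBall (0 : En n) 1).image hw).bddAbove
    exact ⟨B, fun x hx => hB ⟨x, by simpa using hx, rfl⟩⟩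
  have hW10 : 0 ≤ W1 := (hw0 0).trans (hW1 0 (by simp))
  set m := w x0 - w y0 - Phi L x0 y0 with hm
  have hm0 : 0 < m := by rw [hm]; linarith
  set R := (W1 / L) ^ 8 + 2 + ‖y0‖ with hR
  have hq0 : 0 ≤ (W1 / L) ^ 8 := by positivity
  have hR2 : 2 ≤ R := by rw [hR]; linarith [norm_nonneg y0]
  have huc := (isCompact_closedBall (0 : En n) R).uniformContinuousOn_of_continuous hw.continuousOn
  rw [Metric.uniformContinuousOn_iff] at huc
  obtain ⟨r1, hr1, huc⟩ := huc (m / 2) (by positivity)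
  have hd00 : 0 < 1 - ‖x0‖ ^ 2 := by nlinarith [norm_nonneg x0]
  have hr00 : 0 < ‖x0 - y0‖ := norm_pos_iff.2 (sub_ne_zero.2 hxy)
  have hQ : 0 < (L / (W1 + 1)) ^ 8 * r1 := by positivity
  refine ⟨R, min r1 ‖x0 - y0‖ / 2, min ((L / (W1 + 1)) ^ 8 * r1) (1 - ‖x0‖ ^ 2) / 2, m, by linarith,
    by positivity, by positivity, hm0, ⟨x0, y0, ⟨?_, ?_, ?_⟩, le_rfl⟩, by linarith, ?_⟩
  · have := min_le_right ((L / (W1 + 1)) ^ 8 * r1) (1 - ‖x0‖ ^ 2)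
    linarith
  · have := min_le_right r1 ‖x0 - y0‖
    linarith
  · rw [hR]; linarith
  intro x y h1 h2 h3 h4
  have hd : 0 < 1 - ‖x‖ ^ 2 := lt_of_lt_of_le (by positivity) h1
  have hr : 0 < ‖x - y‖ := lt_of_lt_of_le (by positivity) h2
  have hne : x ≠ y := fun h => by simp [h] at hr
  have hx1 : ‖x‖ ≤ 1 := by
    have h1 : ‖x‖ ^ 2 ≤ 1 ^ 2 := by rw [one_pow]; linarith
    exact le_of_sq_le_sq h1 (by norm_num)
  have hP := Phi_pos hL x y
  have hPW : Phi L x y ≤ W1 := by linarith [hw0 y, hW1 x hx1]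
  have hpow := Phi_pow (L := L) x y hne hd
  have k1 : L ^ 8 * (‖x - y‖ / (1 - ‖x‖ ^ 2)) ≤ W1 ^ 8 := by rw [← hpow]; gcongr
  have k2 : ‖x - y‖ ≤ (W1 / L) ^ 8 * (1 - ‖x‖ ^ 2) := by
    rw [← div_le_iff₀ hd, div_pow, le_div_iff₀ (by positivity)]; linarith
  have k3 : ‖x - y‖ ≤ (W1 / L) ^ 8 := k2.trans (by nlinarith [sq_nonneg ‖x‖])
  have k4 : r1 ≤ ‖x - y‖ := by
    by_contra hcon
    have := huc x (by simp; linarith) y (by simpa using h3) (by rw [dist_eq_norm]; linarith)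
    rw [Real.dist_eq] at this
    have := (abs_lt.1 this).2
    linarith
  refine ⟨?_, ?_, ?_⟩
  · have k5 : (L / (W1 + 1)) ^ 8 * r1 ≤ 1 - ‖x‖ ^ 2 := by
      have k6 : L ^ 8 * (‖x - y‖ / (1 - ‖x‖ ^ 2)) ≤ (W1 + 1) ^ 8 := k1.trans (by gcongr; linarith)
      rw [mul_div_assoc', div_le_iff₀ hd] at k6
      rw [div_pow, div_mul_eq_mul_div, div_le_iff₀ (by positivity)]
      have : L ^ 8 * r1 ≤ L ^ 8 * ‖x - y‖ := by gcongr
      linarith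
    have := min_le_left ((L / (W1 + 1)) ^ 8 * r1) (1 - ‖x0‖ ^ 2)
    linarith
  · have := min_le_left r1 ‖x0 - y0‖
    linarith
  · have : ‖y‖ ≤ ‖x‖ + ‖x - y‖ := by
      have := norm_sub_le x (x - y); simpa using this
    rw [hR]; linarith [norm_nonneg y0]
end MainB

section MainC
variable {n : ℕ}

lemma K0_compact (R r0 d0 : ℝ) :
    IsCompact {z : En n × En n | d0 ≤ 1 - ‖z.1‖ ^ 2 ∧ r0 ≤ ‖z.1 - z.2‖ ∧ ‖z.2‖ ≤ R ∧ ‖z.1‖ ≤ 1} := by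
  have hcl : IsClosed {z : En n × En n | d0 ≤ 1 - ‖z.1‖ ^ 2 ∧ r0 ≤ ‖z.1 - z.2‖ ∧ ‖z.2‖ ≤ R ∧ ‖z.1‖ ≤ 1} := by
    have o1 : IsClosed {z : En n × En n | d0 ≤ 1 - ‖z.1‖ ^ 2} := isClosed_le (by fun_prop) (by fun_prop)
    have o2 : IsClosed {z : En n × En n | r0 ≤ ‖z.1 - z.2‖} := isClosed_le (by fun_prop) (by fun_prop)
    have o3 : IsClosed {z : En n × En n | ‖z.2‖ ≤ R} := isClosed_le (by fun_prop) (by fun_prop)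
    have o4 : IsClosed {z : En n × En n | ‖z.1‖ ≤ 1} := isClosed_le (by fun_prop) (by fun_prop)
    exact o1.inter (o2.inter (o3.inter o4))
  refine ((isCompact_closedBall (0 : En n) 1).prod (isCompact_closedBall (0 : En n) R)).of_isClosed_subset hcl ?_
  rintro ⟨x, y⟩ ⟨_, _, h3, h4⟩
  exact ⟨by simpa using h4, by simpa using h3⟩

lemma gamma_lip {L : ℝ} (P P' : En n → En n) (K : NNReal) (hP : LipschitzWith K P) (hP' : LipschitzWith K P')
    (z : En n × En n) (h : z.1 ≠ z.2) (hx : 0 < 1 - ‖z.1‖ ^ 2) :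
    ∃ K : NNReal, ∃ t ∈ nhds z, LipschitzOnWith K
      (fun z : En n × En n => (P z.1 - PhiX L z.1 z.2, P' z.2 - PhiY L z.1 z.2)) t := by
  obtain ⟨K1, t, ht, hl⟩ := (PhiXY_contDiffAt L z h hx).exists_lipschitzOnWith
  refine ⟨K + K1, t, ht, LipschitzOnWith.of_dist_le_mul fun u hu v hv => ?_⟩
  have h1 := hl.dist_le_mul u hu v hv
  have h2 := hP.dist_le_mul u.1 v.1
  have h3 := hP'.dist_le_mul u.2 v.2
  rw [Prod.dist_eq] at h1
  have h4 := (max_le_iff.1 h1).1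
  have h5 := (max_le_iff.1 h1).2
  simp only at h4 h5
  have h6 : dist u.1 v.1 ≤ dist u v := by rw [Prod.dist_eq]; exact le_max_left _ _
  have h7 : dist u.2 v.2 ≤ dist u v := by rw [Prod.dist_eq]; exact le_max_right _ _
  have h8 : (K : ℝ) * dist u.1 v.1 ≤ K * dist u v := by gcongr
  have h9 : (K : ℝ) * dist u.2 v.2 ≤ K * dist u v := by gcongr
  rw [Prod.dist_eq, NNReal.coe_add, add_mul]
  refine max_le ?_ ?_
  · exact (dist_sub_sub_le _ _ _ _).trans (by linarith)
  · exact (dist_sub_sub_le _ _ _ _).trans (by linarith)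

set_option maxHeartbeats 1000000 in
lemma main_claim [NeZero n] (a : Fin n → ℝ) (ha : ClassA a) : ∃ L : ℝ, 0 < L ∧ ∀ w : En n → ℝ, Continuous w →
    (∀ x, 0 ≤ w x) → SubP a w → SupP a w → ∀ x y : En n, x ≠ y → ‖x‖ < 1 → w x - w y ≤ Phi L x y := by
  obtain ⟨L, σ, hL, hσ0, hσ1, hfinal⟩ := concl a ha
  refine ⟨L, hL, fun w hw hw0 hsub hsup x0 y0 hxy0 hx0 => ?_⟩
  by_contra hcon
  push Not at hcon
  obtain ⟨R, r0, d0, m, hR0, hr0, hd0, hm0, ⟨x1, y1, ⟨h11, h12, h13⟩, h14⟩, hR1, hinterior⟩ :=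
    setup w hw hw0 hL x0 y0 hxy0 hx0 hcon
  -- basic facts on the compact set
  have hnx : ∀ x : En n, d0 ≤ 1 - ‖x‖ ^ 2 → ‖x‖ ≤ 1 := fun x hx => by
    have h1 : ‖x‖ ^ 2 ≤ 1 ^ 2 := by rw [one_pow]; linarith
    exact le_of_sq_le_sq h1 (by norm_num)
  have hne : ∀ x y : En n, r0 ≤ ‖x - y‖ → x ≠ y := fun x y h hxy => by
    rw [hxy, sub_self, norm_zero] at h; linarith
  set K0 : Set (En n × En n) :=
    {z | d0 ≤ 1 - ‖z.1‖ ^ 2 ∧ r0 ≤ ‖z.1 - z.2‖ ∧ ‖z.2‖ ≤ R ∧ ‖z.1‖ ≤ 1} with hK0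
  have hK0c : IsCompact K0 := K0_compact R r0 d0
  have hmem1 : (x1, y1) ∈ K0 := ⟨h11, h12, h13, hnx x1 h11⟩
  have hΦc : ContinuousOn (fun z : En n × En n => Phi L z.1 z.2) K0 := fun z hz =>
    (Phi_contDiffAt L z (hne _ _ hz.2.1) (hd0.trans_le hz.1)).continuousAt.continuousWithinAt
  obtain ⟨zM, _, hzM⟩ := hK0c.exists_isMaxOn ⟨_, hmem1⟩ hΦc
  obtain ⟨zm, _, hzm⟩ := hK0c.exists_isMinOn ⟨_, hmem1⟩ hΦc
  obtain ⟨M, hM⟩ : ∃ t, t = Phi L zM.1 zM.2 := ⟨_, rfl⟩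
  obtain ⟨g, hg⟩ : ∃ t, t = Phi L zm.1 zm.2 := ⟨_, rfl⟩
  have hM0 : 0 < M := by rw [hM]; exact Phi_pos hL _ _
  have hg0 : 0 < g := by rw [hg]; exact Phi_pos hL _ _
  have hΦM : ∀ z ∈ K0, Phi L z.1 z.2 ≤ M := fun z hz => by rw [hM]; exact hzM hz
  have hΦg : ∀ z ∈ K0, g ≤ Phi L z.1 z.2 := fun z hz => by rw [hg]; exact hzm hz
  -- constants
  obtain ⟨c0, hc0⟩ : ∃ t, t = M * (1 / r0 ^ 2 + 2 / d0 + 4 / d0 ^ 2 + (1 / r0 + 2 / d0) ^ 2) := ⟨_, rfl⟩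
  have hc00 : 0 < c0 := by rw [hc0]; positivity
  obtain ⟨N0, hN0⟩ : ∃ N0 : ℝ, ∀ x : En n, ‖x‖ ≤ R + 1 → w x ≤ N0 := by
    obtain ⟨B, hB⟩ := ((isCompact_closedBall (0 : En n) (R + 1)).image hw).bddAbove
    exact ⟨B, fun x hx => hB ⟨x, by simpa using hx, rfl⟩⟩
  have hN00 : 0 ≤ N0 := (hw0 0).trans (hN0 0 (by rw [norm_zero]; linarith))
  obtain ⟨N, hN⟩ : ∃ t, t = N0 + 1 := ⟨_, rfl⟩
  set v : En n → ℝ := fun x => min (w x) N with hv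
  have hvc : Continuous v := hw.min continuous_const
  have hvN : ∀ x, |v x| ≤ N := fun x => by
    rw [abs_of_nonneg (le_min (hw0 x) (by linarith))]; exact min_le_right _ _
  have hvw : ∀ x, ‖x‖ ≤ R + 1 → v x = w x := fun x hx => min_eq_left (by linarith [hN0 x hx])
  have hvw' : ∀ x, ‖x‖ ≤ R + 1 → ∀ᶠ h in nhds (0 : En n), v (x + h) = w (x + h) := fun x hx => by
    have hc : Continuous fun h : En n => w (x + h) := by fun_prop
    have : ∀ᶠ h in nhds (0 : En n), w (x + h) < N :=
      (hc.tendsto 0).eventually (gt_mem_nhds (by rw [add_zero]; linarith [hN0 x hx]))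
    filter_upwards [this] with h hh
    exact min_eq_left hh.le
  have huc := (isCompact_closedBall (0 : En n) (R + 1)).uniformContinuousOn_of_continuous hw.continuousOn
  rw [Metric.uniformContinuousOn_iff] at huc
  obtain ⟨s', hs', huc⟩ := huc (m / 16) (by positivity)
  obtain ⟨s, hs⟩ : ∃ t, t = min s' 1 := ⟨_, rfl⟩
  have hs0 : 0 < s := by rw [hs]; exact lt_min hs' one_pos
  obtain ⟨κ, hκ⟩ : ∃ t, t = c0 + 1 + (2 * N + 1) / s ^ 2 := ⟨_, rfl⟩
  have hκ0 : 0 < κ := by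
    have : 0 < 2 * N + 1 := by linarith
    rw [hκ]; positivity
  have hκc : c0 + 1 < 4 * κ := by
    have : 0 < (2 * N + 1) / s ^ 2 := by
      have : 0 < 2 * N + 1 := by linarith
      positivity
    rw [hκ]; linarith
  have hκs : ∀ x z : En n, κ * ‖z - x‖ ^ 2 ≤ 2 * N → ‖z - x‖ < s := by
    intro x z h
    by_contra hcon
    push Not at hcon
    have h1 : s ^ 2 ≤ ‖z - x‖ ^ 2 := by gcongr
    have h2 : κ * s ^ 2 ≤ κ * ‖z - x‖ ^ 2 := by gcongr
    have h3 : κ * s ^ 2 = (c0 + 1) * s ^ 2 + (2 * N + 1) := by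
      rw [hκ, add_mul, div_mul_cancel₀]; positivity
    have h4 : 0 < (c0 + 1) * s ^ 2 := by positivity
    linarith
  have hclose : ∀ x z : En n, ‖x‖ ≤ R → κ * ‖z - x‖ ^ 2 ≤ 2 * N → ‖z‖ ≤ R + 1 ∧ |w z - w x| < m / 16 := by
    intro x z hx h
    have h1 := hκs x z h
    have h2 : ‖z‖ ≤ R + 1 := by
      have : ‖z‖ ≤ ‖z - x‖ + ‖x‖ := by have := norm_add_le (z - x) x; simpa using this
      have h5 : s ≤ 1 := by rw [hs]; exact min_le_right _ _
      linarith
    refine ⟨h2, ?_⟩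
    have := huc z (by simpa using h2) x (by simp; linarith) (by
      rw [dist_eq_norm]; exact h1.trans_le (by rw [hs]; exact min_le_left _ _))
    rwa [Real.dist_eq] at this
  obtain ⟨W, P, hW1, hW2, hW3, hW4⟩ := reg v hvc N hvN κ hκ0
  obtain ⟨W', P', hV1, hV2, hV3, hV4⟩ := reg (fun x => - v x) hvc.neg N (fun x => by rw [abs_neg]; exact hvN x) κ hκ0
  have hWw : ∀ x, ‖x‖ ≤ R → w x ≤ W x ∧ W x ≤ w x + m / 16 := fun x hx => by
    refine ⟨by rw [← hvw x (by linarith)]; exact hW1 x, ?_⟩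
    obtain ⟨z, hz, hz'⟩ := hW2 x
    obtain ⟨k1, k2⟩ := hclose x z hx hz
    rw [hvw z k1] at hz'
    linarith [(abs_lt.1 k2).2]
  have hVw : ∀ x, ‖x‖ ≤ R → - w x ≤ W' x ∧ W' x ≤ - w x + m / 16 := fun x hx => by
    refine ⟨by rw [← hvw x (by linarith)]; exact hV1 x, ?_⟩
    obtain ⟨z, hz, hz'⟩ := hV2 x
    obtain ⟨k1, k2⟩ := hclose x z hx hz
    rw [hvw z k1] at hz'
    linarith [(abs_lt.1 k2).1]
  have hK2 : 0 < 2 * κ := by positivity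
  obtain ⟨KP, hKP⟩ : ∃ KP : NNReal, (KP : ℝ) = 6 * (2 * κ) := ⟨⟨6 * (2 * κ), by positivity⟩, rfl⟩
  have hPl : LipschitzWith KP P := LipschitzWith.of_dist_le_mul fun x y => by
    rw [dist_eq_norm, dist_eq_norm, hKP]; exact c11_lipschitz hK2 hW3 y x
  have hPl' : LipschitzWith KP P' := LipschitzWith.of_dist_le_mul fun x y => by
    rw [dist_eq_norm, dist_eq_norm, hKP]; exact c11_lipschitz hK2 hV3 y x
  have hWc : Continuous W := continuous_iff_continuousAt.2 fun x => (c11_hasFDerivAt hK2 hW3 x).continuousAt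
  have hVc : Continuous W' := continuous_iff_continuousAt.2 fun x => (c11_hasFDerivAt hK2 hV3 x).continuousAt
  obtain ⟨ω, hω⟩ : ∃ t, t = min (σ / 2) (1 / M) := ⟨_, rfl⟩
  have hω0 : 0 < ω := by rw [hω]; positivity
  obtain ⟨ρ, hρ⟩ : ∃ t, t = min (ω * (g / 8) / (R + 1)) (m / (16 * (R + 1))) := ⟨_, rfl⟩
  have hρ0 : 0 < ρ := by rw [hρ]; positivity
  have hρ1 : (R + 1) * ρ ≤ ω * (g / 8) := by
    calc (R + 1) * ρ ≤ (R + 1) * (ω * (g / 8) / (R + 1)) := by gcongr; rw [hρ]; exact min_le_left _ _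
      _ = _ := by field_simp
  have hρ2 : (R + 1) * ρ ≤ m / 16 := by
    calc (R + 1) * ρ ≤ (R + 1) * (m / (16 * (R + 1))) := by gcongr; rw [hρ]; exact min_le_right _ _
      _ = _ := by field_simp
  set Γ : En n × En n → En n × En n :=
    fun z => (P z.1 - PhiX L z.1 z.2, P' z.2 - PhiY L z.1 z.2) with hΓ
  set S : Set (En n × En n) := {z | z ∈ K0 ∧ ‖(Γ z).1‖ ≤ ρ ∧ ‖(Γ z).2‖ ≤ ρ ∧
    IsLocalMax (fun z' : En n × En n => W z'.1 + W' z'.2 - Phi L z'.1 z'.2 -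
      (inner ℝ (Γ z).1 z'.1 + inner ℝ (Γ z).2 z'.2)) z} with hS
  have hsurj : ball (0 : En n × En n) ρ ⊆ Γ '' S := by
    rintro ⟨p, q⟩ hpq
    rw [mem_ball_zero_iff, Prod.norm_def, max_lt_iff] at hpq
    obtain ⟨hp, hq⟩ := hpq
    simp only at hp hq
    set F : En n × En n → ℝ := fun z' => W z'.1 + W' z'.2 - Phi L z'.1 z'.2 -
      (inner ℝ p z'.1 + inner ℝ q z'.2) with hF
    have hFc : ContinuousOn F K0 := by
      refine ContinuousOn.sub (ContinuousOn.sub ?_ hΦc) ?_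
      · exact ((hWc.comp continuous_fst).add (hVc.comp continuous_snd)).continuousOn
      · exact Continuous.continuousOn (by fun_prop)
    obtain ⟨⟨x, y⟩, hz, hzmax⟩ := hK0c.exists_isMaxOn ⟨_, hmem1⟩ hFc
    have hl : ∀ z ∈ K0, |inner ℝ p z.1 + inner ℝ q z.2| ≤ m / 16 := by
      intro z hz
      have i1 := abs_real_inner_le_norm p z.1
      have i2 := abs_real_inner_le_norm q z.2
      have i3 : ‖p‖ * ‖z.1‖ ≤ ρ * 1 := mul_le_mul hp.le hz.2.2.2 (norm_nonneg _) hρ0.le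
      have i4 : ‖q‖ * ‖z.2‖ ≤ ρ * R := mul_le_mul hq.le hz.2.2.1 (norm_nonneg _) hρ0.le
      have := abs_add_le (inner ℝ p z.1) (inner ℝ q z.2)
      linarith
    have j1 : F (x1, y1) ≤ F (x, y) := hzmax hmem1
    have j2 := hl _ hz
    have j3 := hl _ hmem1
    have j4 := hWw x (hz.2.2.2.trans hR1)
    have j5 := hVw y hz.2.2.1
    have j6 := hWw x1 (hmem1.2.2.2.trans hR1)
    have j7 := hVw y1 h13
    simp only [hF] at j1
    simp only [abs_le] at j2 j3
    obtain ⟨s1, s2, s3⟩ := hinterior x y hz.1 hz.2.1 hz.2.2.1 (by linarith)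
    have hnh : K0 ∈ nhds (x, y) := by
      have o1 : IsOpen {z : En n × En n | d0 < 1 - ‖z.1‖ ^ 2} := isOpen_lt (by fun_prop) (by fun_prop)
      have o2 : IsOpen {z : En n × En n | r0 < ‖z.1 - z.2‖} := isOpen_lt (by fun_prop) (by fun_prop)
      have o3 : IsOpen {z : En n × En n | ‖z.2‖ < R} := isOpen_lt (by fun_prop) (by fun_prop)
      filter_upwards [o1.mem_nhds s1, o2.mem_nhds s2, o3.mem_nhds s3] with z q1 q2 q3
      exact ⟨le_of_lt q1, le_of_lt q2, le_of_lt q3, hnx _ (le_of_lt q1)⟩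
    have hloc : IsLocalMax F (x, y) := hzmax.isLocalMax hnh
    obtain ⟨f1, f2, _⟩ := order_cond hK2 W W' P P' hW3 hV3 x y p q (hne x y hz.2.1) (hd0.trans_le hz.1) hloc
    have hΓz : Γ (x, y) = (p, q) := by simp only [hΓ, f1, f2]
    refine ⟨(x, y), ⟨hz, ?_, ?_, ?_⟩, hΓz⟩
    · rw [hΓz]; exact hp.le
    · rw [hΓz]; exact hq.le
    · rw [hΓz]; exact hloc
  have hlip : ∀ z ∈ S, ∃ K : NNReal, ∃ t ∈ nhds z, LipschitzOnWith K Γ t := fun z hz =>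
    gamma_lip P P' KP hPl hPl' z (hne _ _ hz.1.2.1) (hd0.trans_le hz.1.1)
  obtain ⟨z, hzS, hdx, hdy⟩ := jensen P P' KP hPl hPl' Γ S hlip ρ hρ0 hsurj
  obtain ⟨hz, hp, hq, hloc⟩ := hzS
  obtain ⟨p, hpdef⟩ : ∃ p, p = (Γ z).1 := ⟨_, rfl⟩
  obtain ⟨q, hqdef⟩ : ∃ q, q = (Γ z).2 := ⟨_, rfl⟩
  rw [← hpdef] at hp hloc
  rw [← hqdef] at hq hloc
  clear hpdef hqdef hsurj hlip
  clear_value S Γ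
  obtain ⟨x, y⟩ := z
  simp only at hdx hdy
  have hxy := hne x y hz.2.1
  have hd := hd0.trans_le hz.1
  obtain ⟨f1, f2, f3⟩ := order_cond hK2 W W' P P' hW3 hV3 x y p q hxy hd hloc
  obtain ⟨X, hXdef⟩ : ∃ t, t = fderiv ℝ P x := ⟨_, rfl⟩
  obtain ⟨X', hXdef'⟩ : ∃ t, t = fderiv ℝ P' y := ⟨_, rfl⟩
  have hX : HasFDerivAt P X x := by rw [hXdef]; exact hdx.hasFDerivAt
  have hX' : HasFDerivAt P' X' y := by rw [hXdef']; exact hdy.hasFDerivAt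
  have hH := f3 X X' hX hX'
  have hΦ1 : Phi L x y ≤ M := hΦM (x, y) hz
  have hΦ2 : g ≤ Phi L x y := hΦg (x, y) hz
  obtain ⟨b1, b2⟩ := PhiDD_bound hL x y hr0 hd0 hz.2.1 hz.1 hΦ1
  have hXs := c11_symm hK2 hW3 x X hX
  have hXs' := c11_symm hK2 hV3 y X' hX'
  obtain ⟨z0, hz0, hz0'⟩ := transfer hκ0 hκc v W P hW3 hW4 x X hX (fun ξ => by
    have := (hH ξ 0).trans (b1 ξ)
    rwa [← hc0, map_zero, inner_zero_left, add_zero] at this)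
  obtain ⟨z1, hz1, hz1'⟩ := transfer hκ0 hκc (fun x => - v x) W' P' hV3 hV4 y X' hX' (fun ξ => by
    have := (hH 0 ξ).trans (b2 ξ)
    rwa [← hc0, map_zero, inner_zero_left, zero_add] at this)
  have hz0R := (hclose x z0 (hz.2.2.2.trans hR1) hz0).1
  have hz1R := (hclose y z1 hz.2.2.1 hz1).1
  have hM1 : 0 ≤ MT a (X + rk (P x)) := hsub z0 (P x) X hXs (fun η hη => by
    filter_upwards [hz0' η hη, hvw' z0 hz0R] with h k1 k2
    rw [k2, hvw z0 hz0R] at k1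
    exact k1)
  have hM2 : MT a (-X' + rk (-P' y)) ≤ 0 := hsup z1 (-P' y) (-X') hXs'.neg (fun η hη => by
    filter_upwards [hz1' η hη, hvw' z1 hz1R] with h k1 k2
    rw [k2, hvw z1 hz1R] at k1
    rw [inner_neg_left, _root_.neg_apply, inner_neg_left]
    linarith)
  have hr : ‖x - y‖ ≤ R + 1 := (norm_sub_le x y).trans (by linarith [hz.2.2.1, hz.2.2.2])
  have hpp : ∀ p : En n, ‖p‖ ≤ ρ → ‖x - y‖ * ‖p‖ ≤ ω * (Phi L x y / 8) := fun p hp => by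
    calc ‖x - y‖ * ‖p‖ ≤ (R + 1) * ρ := mul_le_mul hr hp (norm_nonneg _) (by linarith)
      _ ≤ ω * (g / 8) := hρ1
      _ ≤ _ := by gcongr
  refine hfinal x y p q X X' ω hxy hd hω0.le (by rw [hω]; exact min_le_left _ _) ?_ (hpp p hp) (hpp q hq) hXs hXs' hH ?_ ?_
  · have : Phi L x y / 8 * ω ≤ M / 8 * (1 / M) := by
      gcongr
      rw [hω]; exact min_le_right _ _
    have e : M / 8 * (1 / M) = 1 / 8 := by field_simp
    linarith
  · rw [← f1, sub_add_cancel]; exact hM1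
  · rw [← f2, sub_add_cancel]; exact hM2
end MainC

section Fin
variable {n : ℕ}

lemma const_of [NeZero n] (a : Fin n → ℝ) (ha : ClassA a) (w : En n → ℝ) (hw : Continuous w)
    (hw0 : ∀ x, 0 ≤ w x) (hsub : SubP a w) (hsup : SupP a w) (x y : En n) : w x ≤ w y := by
  obtain ⟨L, hL, hmain⟩ := main_claim a ha
  by_contra hcon
  push Not at hcon
  have hxy : x ≠ y := fun h => by rw [h] at hcon; exact lt_irrefl _ hcon
  obtain ⟨A, hA⟩ : ∃ A, A = w x - w y := ⟨_, rfl⟩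
  have hA0 : 0 < A := by linarith
  have hr : 0 < ‖x - y‖ := norm_pos_iff.2 (sub_ne_zero.2 hxy)
  have hx0 := norm_nonneg x
  obtain ⟨R, hR⟩ : ∃ R, R = 2 * ‖x‖ + 1 + 4 * L ^ 8 * ‖x - y‖ / A ^ 8 := ⟨_, rfl⟩
  have hRx : 2 * ‖x‖ + 1 ≤ R := by
    have : 0 ≤ 4 * L ^ 8 * ‖x - y‖ / A ^ 8 := by positivity
    linarith
  have hR0 : 0 < R := by linarith
  have hRA : 4 * L ^ 8 * ‖x - y‖ ≤ A ^ 8 * R := by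
    have : A ^ 8 * R = A ^ 8 * (2 * ‖x‖ + 1) + 4 * L ^ 8 * ‖x - y‖ := by rw [hR]; field_simp
    have : 0 ≤ A ^ 8 * (2 * ‖x‖ + 1) := by positivity
    linarith
  have hnx : ‖(1 / R) • x‖ ≤ 1 / 2 := by
    rw [norm_smul, Real.norm_of_nonneg (by positivity), one_div_mul_eq_div, div_le_iff₀ hR0]
    linarith
  have hne : (1 / R) • x ≠ (1 / R) • y := fun h =>
    hxy (smul_right_injective _ (one_div_pos.2 hR0).ne' h)
  have h1 := hmain (fun x => w (R • x)) (hw.comp (continuous_const_smul R)) (fun x => hw0 _)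
    (subP_scale a w R hR0 hsub) (supP_scale a w R hR0 hsup) ((1 / R) • x) ((1 / R) • y) hne (by linarith)
  simp only [smul_smul, mul_one_div_cancel hR0.ne', one_smul] at h1
  rw [← hA] at h1
  have hd : 1 / 2 ≤ 1 - ‖(1 / R) • x‖ ^ 2 := by nlinarith [norm_nonneg ((1 / R) • x)]
  have h2 := Phi_pow (L := L) _ _ hne (by linarith)
  have h3 : A ^ 8 ≤ Phi L ((1 / R) • x) ((1 / R) • y) ^ 8 := by gcongr
  rw [h2, ← smul_sub, norm_smul, Real.norm_of_nonneg (by positivity)] at h3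
  have h4 : 1 / R * ‖x - y‖ / (1 - ‖(1 / R) • x‖ ^ 2) ≤ 1 / R * ‖x - y‖ / (1 / 2) := by gcongr
  have h5 : A ^ 8 ≤ L ^ 8 * (1 / R * ‖x - y‖ / (1 / 2)) := h3.trans (by gcongr)
  have h6 : A ^ 8 * R ≤ 2 * L ^ 8 * ‖x - y‖ := by
    have h7 : A ^ 8 * R ≤ L ^ 8 * (1 / R * ‖x - y‖ / (1 / 2)) * R := by gcongr
    have h8 : L ^ 8 * (1 / R * ‖x - y‖ / (1 / 2)) * R = 2 * L ^ 8 * ‖x - y‖ := by field_simp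
    linarith
  have h9 : 0 < L ^ 8 * ‖x - y‖ := by positivity
  linarith

lemma const_log [NeZero n] (a : Fin n → ℝ) (ha : ClassA a) (u : En n → ℝ) (hu : Continuous u)
    (hu1 : ∀ x, 1 ≤ u x) (hsub : TestSub a u) (hsup : TestSup a u) (x y : En n) : u x = u y := by
  have hpos : ∀ x, 0 < u x := fun x => one_pos.trans_le (hu1 x)
  have h := const_of a ha (fun x => Real.log (u x)) (hu.log fun x => (hpos x).ne')
    (fun x => Real.log_nonneg (hu1 x)) (subP_log a ha.1 u hpos hsub) (supP_log a ha.1 u hpos hsup)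
  exact le_antisymm ((Real.log_le_log_iff (hpos x) (hpos y)).1 (h x y))
    ((Real.log_le_log_iff (hpos y) (hpos x)).1 (h y x))
end Fin

/-- **Liouville theorem (Theorem 7.1).** Let `M_a ∈ 𝒜`. An entire viscosity solution of
`M_a(D²u) = 0` on `ℝⁿ` which is bounded above or bounded below is constant. -/
theorem liouville (n : ℕ) [NeZero n] (a : Fin n → ℝ) (ha : ClassA a)
    (u : En n → ℝ) (hu : Continuous u)
    (hsub : IsViscSubsol a Set.univ (fun _ => 0) u)
    (hsup : IsViscSupersol a Set.univ (fun _ => 0) u)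
    (hbdd : (∃ M, ∀ x, u x ≤ M) ∨ (∃ M, ∀ x, M ≤ u x)) :
    ∃ k : ℝ, ∀ x, u x = k := by
  refine ⟨u 0, fun x => ?_⟩
  rcases hbdd with ⟨M, hM⟩ | ⟨M, hM⟩
  · have hr : (0 : Fin n).rev = lastIdx n := by
      ext; simp [lastIdx, Fin.val_rev]
    have hr' : (lastIdx n).rev = 0 := by rw [← hr, Fin.rev_rev]
    have ha' : ClassA (fun i : Fin n => a i.rev) :=
      ⟨fun i => ha.1 _, by show 0 < a (Fin.rev 0); rw [hr]; exact ha.2.2, by show 0 < a (Fin.rev (lastIdx n)); rw [hr']; exact ha.2.1⟩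
    have := const_log _ ha' (fun x => (M + 1) - u x) (continuous_const.sub hu)
      (fun x => by linarith [hM x]) (testSub_neg a u _ hsup) (testSup_neg a u _ hsub) x 0
    linarith
  · have := const_log a ha (fun x => u x + (1 - M)) (hu.add continuous_const)
      (fun x => by linarith [hM x]) (testSub_of a u _ hsub) (testSup_of a u _ hsup) x 0
    linarith
end
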